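/- Let n > 1 be an integer coprime to 6. There exist infinitely many pairwise non-isomorphic number fields K with the following properties: there is a positive integer y with y not divisible by 5, y not divisible by 7, and y ≡ 49 (mod 144) if n ≡ 1 (mod 3), y ≡ 97 (mod 144) if n ≡ 2 (mod 3), such that the polynomial x⁸ + ((yⁿ−481)/36)x⁶ − ((yⁿ−733)/18)x⁴ + ((yⁿ−481)/36)x² + 1 is irreducible over ℚ and K is its splitting field; K is a totally imaginary Galois extension of ℚ of degree 8 with Galois group isomorphic to the dihedral group D₄ of order 8; and rank_n Cl(K) ≥ 7. -/

import Mathlib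

open Polynomial NumberField

/-- `M` contains a subgroup isomorphic to `(ℤ/nℤ)^s`, i.e. `rank_n M ≥ s`. -/
def HasZModRankGE (M : Type*) [CommGroup M] (n s : ℕ) : Prop :=
  ∃ φ : (Multiplicative (Fin s → ZMod n)) →* M, Function.Injective φ

/-- A number field (here a subfield of `ℂ`) is totally imaginary if none of its complex
embeddings takes only real values. -/
def TotallyImaginary (K : Type*) [Field K] : Prop :=
  ∀ φ : K →+* ℂ, ∃ x : K, (φ x).im ≠ 0

/-!
Write `144 A + 481 = yⁿ` and let `θ` be a root of the octic `x⁸ + 4A x⁶ - (8A - 14) x⁴ + 4A x² + 1`.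
Its eight roots `θ_g` are Möbius transforms of `θ` indexed by the dihedral group, and
`∏ (θ_g - 2) = 144 A + 481 = yⁿ`. Since the factors `θ_g - 2` are pairwise coprime, each generates
the `n`-th power of an ideal. A relation between the classes of these ideals makes a product of the
`θ_g - 2` an `n`-th power up to a unit; the unit group has rank `3` and is generated, modulo `p`-th
powers, by explicit conjugates. Reducing such a relation modulo the prime factors `q` of `y`, where
`θ` may be taken to be `2` and all the numbers involved become products of `2, 3, 5, 7`, and
choosing `y` so that these four are independent modulo `p`-th powers, leaves only the relation
`∏ (θ_g - 2) = yⁿ`, so the rank is at least `8 - 1`.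

For infinitude, the construction for `n * 7 ^ k` also serves `n`, and the class numbers it produces
tend to infinity with `k`.
-/

theorem exists_pow_prime_order {G : Type*} [Group G] {n : ℕ} {x : G} (hn : n ≠ 0) (hx : x ^ n = 1)
    (hx1 : x ≠ 1) : ∃ p k : ℕ, p.Prime ∧ p ∣ n ∧ (x ^ k) ^ p = 1 ∧ x ^ k ≠ 1 := by
  obtain ⟨p, hp, k, hk⟩ := Nat.exists_prime_and_dvd (orderOf_eq_one_iff.not.mpr hx1)
  have hdvd : orderOf x ∣ n := orderOf_dvd_of_pow_eq_one hx
  have hpos : 0 < orderOf x := Nat.pos_of_dvd_of_pos hdvd (Nat.pos_of_ne_zero hn)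
  refine ⟨p, k, hp, (Dvd.intro k hk.symm).trans hdvd, ?_, pow_ne_one_of_lt_orderOf ?_ ?_⟩
  · rw [← pow_mul, mul_comm, ← hk, pow_orderOf_eq_one]
  · rintro rfl
    omega
  · rw [hk] at hpos ⊢
    exact lt_mul_of_one_lt_left (Nat.pos_of_mul_pos_left hpos) hp.one_lt

theorem exists_ofAdd_intCast_eq {ι : Type*} {n : ℕ} (v : Multiplicative (ι → ZMod n)) :
    ∃ f : ι → ℤ, v = Multiplicative.ofAdd fun i => (f i : ZMod n) :=
  ⟨fun i => (v.toAdd i).cast, by simp only [ZMod.intCast_zmod_cast]; rfl⟩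

section CommGroup

variable {M ι : Type*} [CommGroup M] [Fintype ι] {n : ℕ}

/-- The homomorphism `(ℤ/nℤ)^ι → M` sending the `i`-th standard generator to `c i`, written
multiplicatively on the source. -/
def zmodPowHom (c : ι → M) (hc : ∀ i, c i ^ n = 1) : Multiplicative (ι → ZMod n) →* M :=
  AddMonoidHom.toMultiplicativeLeft <| ∑ i, (ZMod.lift n
    ⟨zmultiplesHom (Additive M) (Additive.ofMul (c i)), by
      rw [zmultiplesHom_apply, natCast_zsmul, ← ofMul_pow, hc i, ofMul_one]⟩).comp
    (Pi.evalAddMonoidHom _ i)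

theorem zmodPowHom_intCast (c : ι → M) (hc : ∀ i, c i ^ n = 1) (f : ι → ℤ) :
    zmodPowHom c hc (Multiplicative.ofAdd fun i => (f i : ZMod n)) = ∏ i, c i ^ f i := by
  simp only [zmodPowHom, AddMonoidHom.toMultiplicativeLeft_apply_apply, toAdd_ofAdd,
    AddMonoidHom.finsetSum_apply, AddMonoidHom.comp_apply, Pi.evalAddMonoidHom_apply,
    ZMod.lift_coe, zmultiplesHom_apply, ← ofMul_zpow, ← ofMul_prod, toMul_ofMul]

theorem hasZModRankGE_card_of_prime_power_relations (hn : n ≠ 0) (c : ι → M)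
    (hc : ∀ i, c i ^ n = 1)
    (h : ∀ p : ℕ, p.Prime → p ∣ n → ∀ f : ι → ℤ, ∏ i, (c i ^ (n / p)) ^ f i = 1 →
      ∀ i, (p : ℤ) ∣ f i) : HasZModRankGE M n (Fintype.card ι) := by
  suffices hinj : Function.Injective (zmodPowHom c hc) by
    let e := (AddEquiv.arrowCongr (Fintype.equivFin ι) (AddEquiv.refl (ZMod n))).toMultiplicative
    exact ⟨(zmodPowHom c hc).comp e.symm.toMonoidHom, hinj.comp e.symm.injective⟩
  refine (injective_iff_map_eq_one _).mpr fun v hv => of_not_not fun hv1 => ?_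
  have hvn : v ^ n = 1 := by
    ext i
    simp
  obtain ⟨p, k, hp, ⟨m, rfl⟩, hkp, hk1⟩ := exists_pow_prime_order hn hvn hv1
  obtain ⟨f, hf⟩ := exists_ofAdd_intCast_eq (v ^ k)
  rw [hf] at hkp hk1
  have hm : ∀ i, (m : ℤ) ∣ f i := fun i => by
    have hi : ((p * f i : ℤ) : ZMod (p * m)) = 0 := by
      simpa using congrFun (congrArg Multiplicative.toAdd hkp) i
    rw [ZMod.intCast_zmod_eq_zero_iff_dvd, Nat.cast_mul] at hi
    exact Int.dvd_of_mul_dvd_mul_left (by exact_mod_cast hp.ne_zero) hi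
  choose e he using hm
  have hrel : ∏ i, (c i ^ (p * m / p)) ^ e i = 1 := by
    rw [Nat.mul_div_cancel_left m hp.pos]
    simp only [← zpow_natCast, ← zpow_mul, ← he]
    rw [← zmodPowHom_intCast c hc, ← hf, map_pow, hv, one_pow]
  refine hk1 (Multiplicative.toAdd.injective (funext fun i => ?_))
  obtain ⟨t, ht⟩ := h p hp (dvd_mul_right p m) e hrel i
  change ((f i : ℤ) : ZMod (p * m)) = 0
  rw [ZMod.intCast_zmod_eq_zero_iff_dvd, he i, ht, Nat.cast_mul, mul_comm (p : ℤ)]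
  exact mul_dvd_mul_left _ (dvd_mul_right _ _)

-- By counting: independent elements give an injection of `(ℤ/pℤ)^ι` into `M / M^p`, and the
-- generators give a surjection.
theorem exists_eq_prod_zpow_mul_pow {p : ℕ} [Fact p.Prime] (g ε : ι → M)
    (hg : ∀ u : M, ∃ f : ι → ℤ, ∃ w : M, u = (∏ i, g i ^ f i) * w ^ p)
    (hε : ∀ (f : ι → ℤ) (w : M), ∏ i, ε i ^ f i = w ^ p → ∀ i, (p : ℤ) ∣ f i) (u : M) :
    ∃ f : ι → ℤ, ∃ w : M, u = (∏ i, ε i ^ f i) * w ^ p := by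
  let q : M →* M ⧸ (powMonoidHom p : M →* M).range := QuotientGroup.mk' _
  have hker (x : M) : q x = 1 ↔ ∃ w, w ^ p = x := QuotientGroup.eq_one_iff x
  have hpow (c : ι → M) (i : ι) : q (c i) ^ p = 1 := by
    rw [← map_pow, hker]
    exact ⟨c i, rfl⟩
  have himg (c : ι → M) (f : ι → ℤ) : zmodPowHom (fun i => q (c i)) (hpow c)
      (Multiplicative.ofAdd fun i => (f i : ZMod p)) = q (∏ i, c i ^ f i) := by
    simp only [zmodPowHom_intCast, map_prod, map_zpow]
  have hsurj : Function.Surjective (zmodPowHom (fun i => q (g i)) (hpow g)) := by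
    intro x
    obtain ⟨u, rfl⟩ := QuotientGroup.mk'_surjective _ x
    obtain ⟨f, w, rfl⟩ := hg u
    exact ⟨_, (himg g f).trans (by rw [map_mul, (hker (w ^ p)).mpr ⟨w, rfl⟩, mul_one])⟩
  have hinj : Function.Injective (zmodPowHom (fun i => q (ε i)) (hpow ε)) := by
    refine (injective_iff_map_eq_one _).mpr fun v hv => ?_
    obtain ⟨f, rfl⟩ := exists_ofAdd_intCast_eq v
    obtain ⟨w, hw⟩ := (hker _).mp ((himg ε f).symm.trans hv)
    ext i
    exact (ZMod.intCast_zmod_eq_zero_iff_dvd _ _).mpr (hε f w hw.symm i)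
  have : Finite (M ⧸ (powMonoidHom p : M →* M).range) := Finite.of_surjective _ hsurj
  obtain ⟨v, hv⟩ := ((Nat.bijective_iff_injective_and_card _).mpr ⟨hinj,
    (Nat.card_le_card_of_injective _ hinj).antisymm
      (Nat.card_le_card_of_surjective _ hsurj)⟩).surjective (q u)
  obtain ⟨f, rfl⟩ := exists_ofAdd_intCast_eq v
  obtain ⟨w, hw⟩ := (QuotientGroup.eq (s := (powMonoidHom p : M →* M).range)).mp
    ((himg ε f).symm.trans hv)
  exact ⟨f, w, by rw [show w ^ p = _ from hw, mul_inv_cancel_left]⟩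

end CommGroup

section ZModRank

variable {M : Type*} [CommGroup M]

theorem HasZModRankGE.of_dvd {n N s : ℕ} (h : HasZModRankGE M N s) (hN : N ≠ 0) (hn : n ∣ N) :
    HasZModRankGE M n s := by
  obtain ⟨φ, hφ⟩ := h
  obtain ⟨m, rfl⟩ := hn
  have hm : (m : ℤ) ≠ 0 := by exact_mod_cast right_ne_zero_of_mul hN
  let mulHom : ZMod n →+ ZMod (n * m) := ZMod.lift n ⟨zmultiplesHom _ (m : ZMod (n * m)), by
    rw [zmultiplesHom_apply, natCast_zsmul, nsmul_eq_mul, ← Nat.cast_mul, ZMod.natCast_self]⟩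
  have hinj : Function.Injective mulHom := by
    refine (ZMod.lift_injective _).mpr fun k hk => ?_
    rw [zmultiplesHom_apply, zsmul_eq_mul, ← Int.cast_natCast, ← Int.cast_mul,
      ZMod.intCast_zmod_eq_zero_iff_dvd, Nat.cast_mul] at hk
    exact (ZMod.intCast_zmod_eq_zero_iff_dvd _ _).mpr (Int.dvd_of_mul_dvd_mul_right hm hk)
  exact ⟨φ.comp (mulHom.compLeft (Fin s)).toMultiplicative, hφ.comp (hinj.comp_left)⟩

theorem HasZModRankGE.pow_le_card [Finite M] {n s : ℕ} (h : HasZModRankGE M n s) :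
    n ^ s ≤ Nat.card M := by
  obtain ⟨φ, hφ⟩ := h
  calc n ^ s = Nat.card (Multiplicative (Fin s → ZMod n)) := by
        rw [Nat.card_congr Multiplicative.toAdd, Nat.card_fun, Nat.card_zmod, Nat.card_fin]
    _ ≤ Nat.card M := Nat.card_le_card_of_injective φ hφ

end ZModRank

section Dirichlet

open Filter Topology ArithmeticFunction.vonMangoldt

variable {m : ℕ} {a : ZMod m}

theorem mul_residueClass_div_rpow_le (n : ℕ) {u : ℝ} (hu : 0 < u) (hu1 : u ≤ 1) :
    u * (residueClass a n / (n : ℝ) ^ (1 + u)) ≤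
      {q : ℕ | q.Prime ∧ (q : ZMod m) = a}.indicator (fun q => 1 / (q : ℝ)) n +
        (if n.Prime then 0 else residueClass a n) / n := by
  rcases n.eq_zero_or_pos with rfl | hn
  · simpa using Set.indicator_nonneg (fun _ _ => by positivity) 0
  have hn0 : (0 : ℝ) < n := Nat.cast_pos.mpr hn
  have : 0 < (n : ℝ) ^ u := Real.rpow_pos_of_pos hn0 u
  rw [Real.rpow_add hn0, Real.rpow_one]
  by_cases hprime : n.Prime
  · by_cases hclass : (n : ZMod m) = a
    · have hlog : u * Real.log n ≤ (n : ℝ) ^ u := by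
        have := Real.log_le_rpow_div hn0.le hu
        rwa [le_div_iff₀ hu, mul_comm] at this
      have hval : residueClass a n = Real.log n := by
        rw [residueClass, Set.indicator_of_mem (by exact hclass),
          ArithmeticFunction.vonMangoldt_apply_prime hprime]
      rw [Set.indicator_of_mem (by exact ⟨hprime, hclass⟩), if_pos hprime, zero_div, add_zero, hval,
        mul_div_assoc', div_le_div_iff₀ (by positivity) hn0, one_mul, mul_comm]
      gcongr
    · have hval : residueClass a n = 0 := Set.indicator_of_notMem (by exact hclass) _
      rw [hval, if_pos hprime, zero_div, zero_div, mul_zero, add_zero]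
      exact Set.indicator_nonneg (fun _ _ => by positivity) n
  · rw [Set.indicator_of_notMem fun h => hprime h.1, if_neg hprime, zero_add]
    have hone : 1 ≤ (n : ℝ) ^ u := Real.one_le_rpow (Nat.one_le_cast.mpr hn) hu.le
    have hR : 0 ≤ residueClass a n := residueClass_nonneg a n
    calc u * (residueClass a n / (n * (n : ℝ) ^ u))
        ≤ 1 * (residueClass a n / (n * 1)) := by gcongr
      _ = residueClass a n / n := by rw [one_mul, mul_one]

theorem not_summable_one_div_primes_eq_mod [NeZero m] (ha : IsUnit a) :
    ¬ Summable ({q : ℕ | q.Prime ∧ (q : ZMod m) = a}.indicator fun q => 1 / (q : ℝ)) := by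
  intro hsum
  have hlim : Tendsto (fun u : ℝ => ∑' n : ℕ, u * (residueClass a n / (n : ℝ) ^ (1 + u)))
      (𝓝[>] 0) (𝓝 (∑' _ : ℕ, (0 : ℝ))) := by
    refine tendsto_tsum_of_dominated_convergence (hsum.add (summable_residueClass_non_primes_div a))
      (fun n => ?_) ?_
    · rcases n.eq_zero_or_pos with rfl | hn
      · simp
      · have hn0 : (n : ℝ) ≠ 0 := (Nat.cast_pos.mpr hn).ne'
        have hcont : Continuous fun u : ℝ => u * (residueClass a n / (n : ℝ) ^ (1 + u)) :=
          continuous_id.mul <| continuous_const.div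
            ((Real.continuous_const_rpow hn0).comp (by fun_prop))
            fun u => (Real.rpow_pos_of_pos (by positivity) _).ne'
        simpa using (hcont.tendsto 0).mono_left nhdsWithin_le_nhds
    · filter_upwards [Ioc_mem_nhdsGT (zero_lt_one' ℝ)] with u hu n
      rw [Real.norm_of_nonneg]
      · exact mul_residueClass_div_rpow_le n hu.1 hu.2
      · exact mul_nonneg hu.1.le (div_nonneg (residueClass_nonneg a n) (by positivity))
  obtain ⟨C, hC⟩ := LSeries_residueClass_lower_bound ha
  have hlower : ∀ᶠ u : ℝ in 𝓝[>] 0, (m.totient : ℝ)⁻¹ - C * u ≤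
      ∑' n : ℕ, u * (residueClass a n / (n : ℝ) ^ (1 + u)) := by
    filter_upwards [Ioc_mem_nhdsGT (zero_lt_one' ℝ)] with u hu
    have h := hC (x := 1 + u) ⟨by linarith [hu.1], by linarith [hu.2]⟩
    rw [add_sub_cancel_left] at h
    rw [tsum_mul_left]
    calc (m.totient : ℝ)⁻¹ - C * u = u * ((m.totient : ℝ)⁻¹ / u - C) := by
          field_simp [hu.1.ne']
      _ ≤ _ := mul_le_mul_of_nonneg_left h hu.1.le
  have hφ : 0 < (m.totient : ℝ)⁻¹ := inv_pos.mpr (mod_cast m.totient.pos_of_neZero)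
  have hlin : Tendsto (fun u : ℝ => (m.totient : ℝ)⁻¹ - C * u) (𝓝[>] 0)
      (𝓝 ((m.totient : ℝ)⁻¹ - C * 0)) :=
    (Continuous.tendsto (by fun_prop) 0).mono_left nhdsWithin_le_nhds
  have := le_of_tendsto_of_tendsto hlin hlim hlower
  rw [tsum_zero, mul_zero, sub_zero] at this
  exact this.not_gt hφ

end Dirichlet

section CountingIdeals

open Filter Topology

variable {R : Type*} [CommRing R] [IsDedekindDomain R] [Module.Free ℤ R] {W : ℕ}
  {Q Q' : ℕ → Ideal R} {A : Set ℕ}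

theorem ideal_eq_of_le_of_prime_absNorm {J P : Ideal R} (hJ : (Ideal.absNorm J).Prime)
    (hP : (Ideal.absNorm P).Prime) (hle : J ≤ P) : J = P :=
  ((Ideal.isPrime_of_irreducible_absNorm hJ).isMaximal fun h =>
    hJ.ne_zero (by rw [h, Ideal.absNorm_bot])).eq_of_le
    (Ideal.isPrime_of_irreducible_absNorm hP).ne_top hle

theorem absNorm_factorization_prod (hQ : ∀ q : ℕ, q.Prime → ¬ q ∣ W → Ideal.absNorm (Q q) = q)
    {m : ℕ} (hm : m ≠ 0) (hmW : m.Coprime W) :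
    Ideal.absNorm (m.factorization.prod fun q k => Q q ^ k) = m := by
  conv_rhs => rw [← Nat.prod_factorization_pow_eq_self hm]
  rw [map_finsuppProd]
  refine Finsupp.prod_congr fun q hq => ?_
  have hqm := Nat.support_factorization m ▸ hq
  have hprime := Nat.prime_of_mem_primeFactors hqm
  rw [map_pow, hQ q hprime fun hqW => hprime.one_lt.ne'
    (Nat.eq_one_of_dvd_coprimes hmW (Nat.dvd_of_mem_primeFactors hqm) hqW)]

/-- `A` is a set of primes `q ∤ W` for which `Q' q` is a second prime ideal of norm `q`, beside
the `Q q` that exist for all `q ∤ W`. -/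
structure HasSecondPrime (W : ℕ) (Q Q' : ℕ → Ideal R) (A : Set ℕ) : Prop where
  absNorm_fst : ∀ q : ℕ, q.Prime → ¬ q ∣ W → Ideal.absNorm (Q q) = q
  prime : ∀ q ∈ A, q.Prime
  absNorm_snd : ∀ q ∈ A, Ideal.absNorm (Q' q) = q
  ne : ∀ q ∈ A, Q q ≠ Q' q

namespace HasSecondPrime

theorem eq_and_eq_of_mul_eq_mul (h : HasSecondPrime W Q Q' A) {m m' q q' : ℕ} (hm : m ≠ 0)
    (hm' : m' ≠ 0) (hmW : m.Coprime W) (hmW' : m'.Coprime W) (hq : q ∈ A) (hq' : q' ∈ A)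
    (heq : (m.factorization.prod fun q k => Q q ^ k) * Q' q =
      (m'.factorization.prod fun q k => Q q ^ k) * Q' q') : q = q' ∧ m = m' := by
  have hprime : ∀ {r}, r ∈ A → (Ideal.absNorm (Q' r)).Prime := fun hr =>
    (h.absNorm_snd _ hr).symm ▸ h.prime _ hr
  have hP := Ideal.isPrime_of_irreducible_absNorm (hprime hq)
  have hqq : q = q' := by
    have hdvd : (m'.factorization.prod fun q k => Q q ^ k) * Q' q' ≤ Q' q :=
      heq ▸ Ideal.mul_le_right
    rcases hP.mul_le.mp hdvd with hle | hle
    · obtain ⟨r, hr, hle⟩ := hP.prod_le.mp hle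
      have hrm := Nat.support_factorization m' ▸ hr
      have hrp := Nat.prime_of_mem_primeFactors hrm
      have hnorm := h.absNorm_fst r hrp fun hrW => hrp.one_lt.ne'
        (Nat.eq_one_of_dvd_coprimes hmW' (Nat.dvd_of_mem_primeFactors hrm) hrW)
      have hQ := ideal_eq_of_le_of_prime_absNorm (hnorm.symm ▸ hrp) (hprime hq)
        (hP.le_of_pow_le hle)
      have hrq : r = q := by rw [← hnorm, hQ, h.absNorm_snd q hq]
      exact absurd (hrq ▸ hQ) (h.ne q hq)
    · rw [← h.absNorm_snd q' hq', ideal_eq_of_le_of_prime_absNorm (hprime hq') (hprime hq) hle,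
        h.absNorm_snd q hq]
  subst hqq
  have hnorm := congrArg Ideal.absNorm heq
  rw [map_mul, map_mul, absNorm_factorization_prod h.absNorm_fst hm hmW,
    absNorm_factorization_prod h.absNorm_fst hm' hmW'] at hnorm
  exact ⟨rfl, Nat.eq_of_mul_eq_mul_right (hprime hq).pos hnorm⟩

variable {K : Type*} [Field K] [NumberField K] {Q Q' : ℕ → Ideal (𝓞 K)}

theorem finite_absNorm_le (K : Type*) [Field K] [NumberField K] (X : ℝ) :
    Finite {I : Ideal (𝓞 K) // (Ideal.absNorm I : ℝ) ≤ X} :=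
  ((Ideal.finite_setOfPred_absNorm_le (S := 𝓞 K) ⌊X⌋₊).subset
    fun _ hI => Nat.le_floor hI).to_subtype

theorem sum_sub_one_le_card (h : HasSecondPrime W Q Q' A) (hW : W ≠ 0) {T : Finset ℕ}
    (hT : ∀ q ∈ T, q ∈ A) (X : ℝ) :
    ∑ q ∈ T, (X / (q * W) - 1) ≤ Nat.card {I : Ideal (𝓞 K) // (Ideal.absNorm I : ℝ) ≤ X} := by
  have := finite_absNorm_le K X
  let m (k : ℕ) : ℕ := k * W + 1
  have hm (k : ℕ) : (m k).Coprime W := by simp [m]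
  let Z : Finset (Σ _ : ℕ, ℕ) := T.sigma fun q => Finset.range ⌊X / (q * W)⌋₊
  let J (z : Σ _ : ℕ, ℕ) : Ideal (𝓞 K) := ((m z.2).factorization.prod fun q k => Q q ^ k) * Q' z.1
  have hmem : ∀ z ∈ Z, (Ideal.absNorm (J z) : ℝ) ≤ X := by
    rintro ⟨q, k⟩ hz
    obtain ⟨hq, hk⟩ := Finset.mem_sigma.mp hz
    have hqA := hT q hq
    have hq0 : (0 : ℝ) < q := Nat.cast_pos.mpr (h.prime q hqA).pos
    have hW1 : (1 : ℝ) ≤ W := Nat.one_le_cast.mpr (Nat.pos_of_ne_zero hW)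
    have hkX : (k + 1 : ℝ) ≤ X / (q * W) := by
      exact_mod_cast (Nat.le_floor_iff' k.succ_ne_zero).mp (Finset.mem_range.mp hk)
    rw [le_div_iff₀ (by positivity)] at hkX
    rw [map_mul, absNorm_factorization_prod h.absNorm_fst (Nat.succ_ne_zero _) (hm k),
      h.absNorm_snd q hqA]
    calc ((m k * q : ℕ) : ℝ) = (k * W + 1) * q := by push_cast [m]; ring
      _ ≤ (k * W + W) * q := by gcongr
      _ = (k + 1) * (q * W) := by ring
      _ ≤ X := hkX
  have hinj : Function.Injective fun z : Z =>
      (⟨J z, hmem z z.2⟩ : {I : Ideal (𝓞 K) // (Ideal.absNorm I : ℝ) ≤ X}) := by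
    rintro ⟨⟨q, k⟩, hz⟩ ⟨⟨q', k'⟩, hz'⟩ heq
    obtain ⟨rfl, hk⟩ := h.eq_and_eq_of_mul_eq_mul (Nat.succ_ne_zero _) (Nat.succ_ne_zero _)
      (hm k) (hm k') (hT q (Finset.mem_sigma.mp hz).1) (hT q' (Finset.mem_sigma.mp hz').1)
      (congrArg Subtype.val heq)
    obtain rfl : k = k' :=
      Nat.eq_of_mul_eq_mul_right (Nat.pos_of_ne_zero hW) (Nat.succ_injective hk)
    rfl
  calc ∑ q ∈ T, (X / (q * W) - 1) ≤ ∑ q ∈ T, (⌊X / (q * W)⌋₊ : ℝ) :=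
        Finset.sum_le_sum fun q _ => (Nat.sub_one_lt_floor _).le
    _ = Nat.card Z := by
        rw [Nat.card_eq_finsetCard, Finset.card_sigma, Nat.cast_sum]
        simp only [Finset.card_range]
    _ ≤ _ := by exact_mod_cast Nat.card_le_card_of_injective _ hinj

-- Dividing the count by `X → ∞` bounds `∑ 1 / q` by `W` times the ideal density of `K`.
theorem summable_one_div (h : HasSecondPrime W Q Q' A) (hW : W ≠ 0) :
    Summable (A.indicator fun q => 1 / (q : ℝ)) := by
  classical
  obtain ⟨ρ, hρ⟩ : ∃ ρ : ℝ, Tendsto (fun X : ℝ =>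
      (Nat.card {I : Ideal (𝓞 K) // (Ideal.absNorm I : ℝ) ≤ X} : ℝ) / X) atTop (𝓝 ρ) :=
    ⟨_, NumberField.Ideal.tendsto_norm_le_div_atTop K⟩
  have hbound {T : Finset ℕ} (hT : ∀ q ∈ T, q ∈ A) : ∑ q ∈ T, (1 : ℝ) / (q * W) ≤ ρ := by
    have hlim : Tendsto (fun X : ℝ => ∑ q ∈ T, (1 : ℝ) / (q * W) - T.card / X) atTop
        (𝓝 (∑ q ∈ T, (1 : ℝ) / (q * W) - 0)) :=
      tendsto_const_nhds.sub (tendsto_const_nhds.div_atTop tendsto_id)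
    rw [sub_zero] at hlim
    refine le_of_tendsto_of_tendsto hlim hρ ?_
    filter_upwards [eventually_gt_atTop 0] with X hX
    refine (le_div_iff₀ hX).mpr (le_trans (le_of_eq ?_) (h.sum_sub_one_le_card hW hT X))
    rw [Finset.sum_sub_distrib, sub_mul, Finset.sum_mul, Finset.sum_const, nsmul_one,
      div_mul_cancel₀ _ hX.ne']
    exact congrArg (· - _) (Finset.sum_congr rfl fun q _ => by ring)
  have : (0 : ℝ) < W := Nat.cast_pos.mpr (Nat.pos_of_ne_zero hW)
  refine summable_of_sum_le (c := ρ * W) (Set.indicator_nonneg fun _ _ => by positivity)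
    fun u => ?_
  calc ∑ q ∈ u, A.indicator (fun q => 1 / (q : ℝ)) q
      = (∑ q ∈ u with q ∈ A, (1 : ℝ) / (q * W)) * W := by
        rw [Finset.sum_indicator_eq_sum_filter, Finset.sum_mul]
        exact Finset.sum_congr rfl fun q _ => by field_simp
    _ ≤ ρ * W := by
        gcongr
        exact hbound fun q hq => (Finset.mem_filter.mp hq).2

end HasSecondPrime

theorem summable_one_div_of_two_ideals (K : Type*) [Field K] [NumberField K] (hW : W ≠ 0)
    (hone : ∀ q : ℕ, q.Prime → ¬ q ∣ W → ∃ P : Ideal (𝓞 K), Ideal.absNorm P = q)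
    (htwo : ∀ q ∈ A, q.Prime ∧ ∃ P P' : Ideal (𝓞 K), P ≠ P' ∧
      Ideal.absNorm P = q ∧ Ideal.absNorm P' = q) :
    Summable (A.indicator fun q => 1 / (q : ℝ)) := by
  choose! Q hQ using hone
  have hother : ∀ q ∈ A, ∃ P : Ideal (𝓞 K), Ideal.absNorm P = q ∧ Q q ≠ P := fun q hq => by
    obtain ⟨-, P, P', hne, hP, hP'⟩ := htwo q hq
    by_cases h : Q q = P
    · exact ⟨P', hP', h ▸ hne⟩
    · exact ⟨P, hP, h⟩
  choose! Q' hQ' using hother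
  exact HasSecondPrime.summable_one_div (K := K) (Q := Q) (Q' := Q') ⟨hQ, fun q hq => (htwo q hq).1,
    fun q hq => (hQ' q hq).1, fun q hq => (hQ' q hq).2⟩ hW

end CountingIdeals

section PadicPlaces

variable {q : ℕ} [Fact q.Prime] {K : Type*} [Field K]

theorem exists_padicInt_root {f : ℤ[X]} (hf : f.Monic) {b : ZMod q} (hb : aeval b f = 0)
    (hb' : aeval b (derivative f) ≠ 0) :
    ∃ z : ℤ_[q], aeval z f = 0 ∧ PadicInt.toZMod z = b := by
  obtain ⟨a, rfl⟩ := ZMod.ringHom_surjective (PadicInt.toZMod (p := q)) b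
  have hred (g : ℤ[X]) : PadicInt.toZMod ((g.map (algebraMap ℤ ℤ_[q])).eval a) =
      aeval (PadicInt.toZMod a) g := by
    rw [eval_map_algebraMap]
    exact (aeval_algHom_apply (PadicInt.toZMod (p := q)).toIntAlgHom a g).symm
  have hker (c : ℤ_[q]) : c ∈ IsLocalRing.maximalIdeal ℤ_[q] ↔ PadicInt.toZMod c = 0 := by
    rw [← PadicInt.ker_toZMod, RingHom.mem_ker]
  obtain ⟨z, hz, hza⟩ := HenselianRing.is_henselian (I := IsLocalRing.maximalIdeal ℤ_[q])
    (f.map (algebraMap ℤ ℤ_[q])) (hf.map _) a ((hker _).mpr ((hred f).trans hb)) (by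
      refine IsUnit.map _ (of_not_not fun h => hb' ?_)
      rw [← hred, ← derivative_map]
      exact (hker _).mp h)
  exact ⟨z, by rwa [IsRoot, eval_map_algebraMap] at hz,
    sub_eq_zero.mp ((map_sub _ _ _).symm.trans ((hker _).mp hza))⟩

theorem exists_algHom_apply_eq {F L : Type*} [Field F] [Algebra F K] [FiniteDimensional F K]
    [CommRing L] [Algebra F L] {x : K} (hx : IntermediateField.adjoin F {x} = ⊤) {z : L}
    (hz : aeval z (minpoly F x) = 0) : ∃ φ : K →ₐ[F] L, φ x = z := by
  have hint : IsIntegral F x := .of_finite F x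
  have htop : Algebra.adjoin F {x} = ⊤ := by
    rw [← IntermediateField.adjoin_simple_toSubalgebra_of_isAlgebraic hint.isAlgebraic, hx,
      IntermediateField.top_toSubalgebra]
  let B := PowerBasis.ofAdjoinEqTop' hint htop
  have hgen : B.gen = x := PowerBasis.ofAdjoinEqTop'_gen hint htop
  exact ⟨B.lift z (by rwa [hgen]), (congrArg _ hgen.symm).trans (B.lift_gen z _)⟩

theorem norm_le_one_of_isIntegral {z : ℚ_[q]} (hz : IsIntegral ℤ z) : ‖z‖ ≤ 1 := by
  obtain ⟨w, rfl⟩ := IsIntegrallyClosed.isIntegral_iff.mp (hz.tower_top (A := ℤ_[q]))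
  exact w.2

/-- The restriction to rings of integers of a `q`-adic embedding of a number field. -/
noncomputable def ringOfIntegersPadicHom (φ : K →+* ℚ_[q]) : 𝓞 K →+* ℤ_[q] :=
  (φ.comp (algebraMap (𝓞 K) K)).codRestrict (PadicInt.subring q) fun x =>
    norm_le_one_of_isIntegral (x.isIntegral_coe.map φ.toIntAlgHom)

variable [NumberField K]

theorem exists_ringOfIntegers_padicInt_hom {θ : 𝓞 K}
    (hθ : IntermediateField.adjoin ℚ {(θ : K)} = ⊤) {f : ℤ[X]}
    (hf : minpoly ℚ (θ : K) = f.map (algebraMap ℤ ℚ)) {b : ZMod q} (hb : aeval b f = 0)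
    (hb' : aeval b (derivative f) ≠ 0) : ∃ ψ : 𝓞 K →+* ℤ_[q], PadicInt.toZMod (ψ θ) = b := by
  have hmonic : f.Monic := Polynomial.monic_of_injective (algebraMap ℤ ℚ).injective_int
    (hf ▸ minpoly.monic (.of_finite ℚ _))
  obtain ⟨z, hz, rfl⟩ := exists_padicInt_root hmonic hb hb'
  obtain ⟨φ, hφ⟩ := exists_algHom_apply_eq hθ (z := (z : ℚ_[q])) (by
    rw [hf, aeval_map_algebraMap, ← PadicInt.algebraMap_apply, aeval_algebraMap_apply, hz,
      map_zero])
  refine ⟨ringOfIntegersPadicHom φ.toRingHom, ?_⟩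
  congr 1
  exact Subtype.coe_injective hφ

theorem absNorm_ker_zmod (ρ : 𝓞 K →+* ZMod q) : Ideal.absNorm (RingHom.ker ρ) = q := by
  rw [Ideal.absNorm_apply, Submodule.cardQuot_apply,
    Nat.card_congr (RingHom.quotientKerEquivOfSurjective (ZMod.ringHom_surjective ρ)).toEquiv,
    Nat.card_zmod]

end PadicPlaces

section LocalPowers

variable {p : ℕ}

theorem exists_pow_eq_one_ne_one [Fact p.Prime] {q : ℕ} [hq : Fact q.Prime]
    (hqp : (q : ZMod p) = 1) : ∃ ζ : ZMod q, ζ ^ p = 1 ∧ ζ ≠ 1 := by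
  have hdvd : p ∣ Fintype.card (ZMod q)ˣ := by
    rw [ZMod.card_units, ← CharP.cast_eq_zero_iff (ZMod p) p, Nat.cast_sub hq.out.one_lt.le, hqp,
      Nat.cast_one, sub_self]
  obtain ⟨ζ, hζ⟩ := exists_prime_orderOf_dvd_card p hdvd
  refine ⟨ζ, by rw [← Units.val_pow_eq_pow_val, ← hζ, pow_orderOf_eq_one, Units.val_one], ?_⟩
  rw [Ne, Units.val_eq_one, ← orderOf_eq_one_iff, hζ]
  exact (Fact.out : p.Prime).ne_one

theorem exists_numberField_minpoly_eq {f : ℤ[X]} (hf : f.Monic)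
    (hirr : Irreducible (f.map (algebraMap ℤ ℚ))) :
    ∃ (K : Type) (_ : Field K) (_ : NumberField K) (θ : 𝓞 K),
      IntermediateField.adjoin ℚ {(θ : K)} = ⊤ ∧ minpoly ℚ (θ : K) = f.map (algebraMap ℤ ℚ) := by
  have := Fact.mk hirr
  have hmin := AdjoinRoot.minpoly_root hirr.ne_zero
  rw [hf.map (algebraMap ℤ ℚ), inv_one, C_1, mul_one] at hmin
  have hint : IsIntegral ℤ (AdjoinRoot.root (f.map (algebraMap ℤ ℚ))) := ⟨f, hf, by
    rw [← aeval_def, ← aeval_map_algebraMap ℚ]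
    convert! minpoly.aeval ℚ (AdjoinRoot.root (f.map (algebraMap ℤ ℚ)))
    exact hmin.symm⟩
  refine ⟨AdjoinRoot (f.map (algebraMap ℤ ℚ)), inferInstance, inferInstance, ⟨_, hint⟩, ?_, ?_⟩
  · convert! IntermediateField.adjoin_root_eq_top (f.map (algebraMap ℤ ℚ))
  · convert! hmin

section Counting

variable {K : Type*} [Field K] [NumberField K] {B : ℤ} {θ : 𝓞 K} {q : ℕ}

theorem exists_ringHom_zmod_apply_eq [Fact q.Prime] (hp : p ≠ 0)
    (hθ : IntermediateField.adjoin ℚ {(θ : K)} = ⊤)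
    (hmin : minpoly ℚ (θ : K) = X ^ p - C (B : ℚ)) (hqp : ¬ q ∣ p) (hqB : ¬ (q : ℤ) ∣ B)
    {b : ZMod q} (hb : b ^ p = B) : b ≠ 0 ∧ ∃ ρ : 𝓞 K →+* ZMod q, ρ θ = b := by
  rw [← CharP.cast_eq_zero_iff (ZMod q)] at hqp
  rw [← ZMod.intCast_zmod_eq_zero_iff_dvd] at hqB
  have hb0 : b ≠ 0 := by
    rintro rfl
    exact hqB (by rw [← hb, zero_pow hp])
  obtain ⟨ψ, hψ⟩ := exists_ringOfIntegers_padicInt_hom hθ (f := X ^ p - C B) (b := b)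
    (by simp [hmin]) (by simp [hb]) (by simp [hqp, hb0, derivative_X_pow])
  exact ⟨hb0, PadicInt.toZMod.comp ψ, hψ⟩

theorem exists_two_ideals_absNorm_eq [Fact p.Prime] (hq : q.Prime) (hqp : (q : ZMod p) = 1)
    (hroot : ∃ b : ZMod q, b ^ p = B)
    (hhom : ∀ b : ZMod q, b ^ p = B → b ≠ 0 ∧ ∃ ρ : 𝓞 K →+* ZMod q, ρ θ = b) :
    ∃ P P' : Ideal (𝓞 K), P ≠ P' ∧ Ideal.absNorm P = q ∧ Ideal.absNorm P' = q := by
  have := Fact.mk hq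
  obtain ⟨b, hb⟩ := hroot
  obtain ⟨ζ, hζ, hζ1⟩ := exists_pow_eq_one_ne_one hqp
  obtain ⟨hb0, ρ, hρ⟩ := hhom b hb
  obtain ⟨-, ρ', hρ'⟩ := hhom (b * ζ) (by rw [mul_pow, hb, hζ, mul_one])
  refine ⟨_, _, fun hker => hζ1 ?_, absNorm_ker_zmod ρ, absNorm_ker_zmod ρ'⟩
  rw [ZMod.ringHom_eq_of_ker_eq ρ ρ' hker, hρ'] at hρ
  exact mul_left_cancel₀ hb0 (hρ.trans (mul_one b).symm)

end Counting

-- If `B` is not a `p`-th power, let `θ ^ p = B`. A `p`-th root of `B` mod `q` gives an ideal of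
-- norm `q` in `ℚ(θ)`, and for `q ≡ 1 (mod p)` there are several; the counting of ideals
-- then contradicts the divergence of `∑ 1 / q`.
theorem exists_pow_eq_of_forall_zmod (hp : p.Prime) (B : ℤ) (N : ℕ)
    (h : ∀ q : ℕ, q.Prime → N < q → ∃ x : ZMod q, x ^ p = B) : ∃ x : ℚ, x ^ p = B := by
  by_contra! hB
  have hB0 : B ≠ 0 := by
    rintro rfl
    exact hB 0 (by rw [zero_pow hp.ne_zero, Int.cast_zero])
  have := Fact.mk hp
  have hmap : (X ^ p - C B : ℤ[X]).map (algebraMap ℤ ℚ) = X ^ p - C (B : ℚ) := by simp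
  obtain ⟨K, _, _, θ, hθ, hmin⟩ := exists_numberField_minpoly_eq
    (monic_X_pow_sub_C B hp.ne_zero) (hmap ▸ X_pow_sub_C_irreducible_of_prime hp hB)
  let W := N.factorial * (p * B.natAbs)
  have hW0 : W ≠ 0 := mul_ne_zero N.factorial_ne_zero
    (mul_ne_zero hp.ne_zero (Int.natAbs_ne_zero.mpr hB0))
  have hroot {q : ℕ} (hq : q.Prime) (hqW : ¬ q ∣ W) : ∃ b : ZMod q, b ^ p = B :=
    h q hq (not_le.mp fun hle => hqW ((hq.dvd_factorial.mpr hle).mul_right _))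
  have hhom {q : ℕ} (hq : q.Prime) (hqW : ¬ q ∣ W) (b : ZMod q) (hb : b ^ p = B) :
      b ≠ 0 ∧ ∃ ρ : 𝓞 K →+* ZMod q, ρ θ = b := by
    have := Fact.mk hq
    exact exists_ringHom_zmod_apply_eq hp.ne_zero hθ (hmin.trans hmap)
      (fun hqp => hqW ((hqp.mul_right _).mul_left _))
      (fun hqB => hqW (((Int.natCast_dvd.mp hqB).mul_left p).mul_left _)) hb
  have hsum : Summable ({q : ℕ | q.Prime ∧ (q : ZMod p) = 1 ∧ ¬ q ∣ W}.indicator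
      fun q => 1 / (q : ℝ)) := by
    refine summable_one_div_of_two_ideals K hW0 (fun q hq hqW => ?_)
      fun q ⟨hq, hqp, hqW⟩ =>
        ⟨hq, exists_two_ideals_absNorm_eq hq hqp (hroot hq hqW) (hhom hq hqW)⟩
    have := Fact.mk hq
    obtain ⟨b, hb⟩ := hroot hq hqW
    obtain ⟨-, ρ, -⟩ := hhom hq hqW b hb
    exact ⟨_, absNorm_ker_zmod ρ⟩
  refine not_summable_one_div_primes_eq_mod (a := (1 : ZMod p)) isUnit_one
    ((summable_congr_cofinite ?_).mp hsum)
  filter_upwards [(Nat.divisors W).finite_toSet.compl_mem_cofinite] with q hq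
  have hqW : ¬ q ∣ W := fun hdvd => hq (by simpa [hW0] using hdvd)
  simp only [Set.indicator, Set.mem_ofPred_eq, hqW, not_false_eq_true, and_true]

variable {ι : Type*} [Fintype ι]

/-- The integers `ℓ i` are multiplicatively independent modulo `p`-th powers in the product of
the groups `(ℤ/qℤ)ˣ`, where `q` runs over the prime divisors of `y`. -/
def LocallyIndependent (ℓ : ι → ℕ) (p y : ℕ) : Prop :=
  ∀ v : ι → ℤ, (∀ q : ℕ, ∀ _ : Fact q.Prime, q ∣ y →
    ∃ x : ZMod q, x ^ p = ∏ i, (ℓ i : ZMod q) ^ v i) → ∀ i, (p : ℤ) ∣ v i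

theorem LocallyIndependent.of_dvd {ℓ : ι → ℕ} {Q y : ℕ} (h : LocallyIndependent ℓ p Q)
    (hQ : Q ∣ y) : LocallyIndependent ℓ p y :=
  fun v hv => h v fun q hq hqQ => hv q hq (hqQ.trans hQ)

variable {ℓ : ι → ℕ}

theorem dvd_of_prod_pow_eq_pow (hℓ : ∀ i, (ℓ i).Prime) (hinj : Function.Injective ℓ)
    {e : ι → ℕ} {x : ℚ} (hx : x ^ p = (∏ i, ℓ i ^ e i : ℕ)) (i : ι) : p ∣ e i := by
  classical
  have := Fact.mk (hℓ i)
  have hval : padicValNat (ℓ i) (∏ j, ℓ j ^ e j) = e i := by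
    rw [← Nat.factorization_def _ (hℓ i),
      Nat.factorization_prod_apply fun j _ => pow_ne_zero _ (hℓ j).ne_zero]
    simp [(hℓ _).factorization, Finsupp.single_apply, hinj.eq_iff]
  have hpow := congrArg (padicValRat (ℓ i)) hx
  rw [padicValRat.pow, padicValRat.of_nat, hval] at hpow
  exact Int.natCast_dvd_natCast.mp (Dvd.intro _ hpow)

theorem exists_prime_forall_pow_ne (hp : p.Prime) (hℓ : ∀ i, (ℓ i).Prime)
    (hinj : Function.Injective ℓ) {e : ι → ℕ} (he : ∃ i, ¬ p ∣ e i) (N : ℕ) :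
    ∃ q : ℕ, q.Prime ∧ N < q ∧ ∀ x : ZMod q, x ^ p ≠ ∏ i, (ℓ i : ZMod q) ^ e i := by
  by_contra! hcon
  obtain ⟨x, hx⟩ := exists_pow_eq_of_forall_zmod hp (∏ i, ℓ i ^ e i : ℕ) N (by
    exact_mod_cast hcon)
  obtain ⟨i, hi⟩ := he
  exact hi (dvd_of_prod_pow_eq_pow hℓ hinj (by exact_mod_cast hx) i)

theorem exists_locallyIndependent (hp : p.Prime) (hℓ : ∀ i, (ℓ i).Prime)
    (hinj : Function.Injective ℓ) (N : ℕ) :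
    ∃ Q : ℕ, (∀ q : ℕ, q.Prime → q ∣ Q → N < q) ∧ LocallyIndependent ℓ p Q := by
  classical
  have := Fact.mk hp
  have hlocal (e : {e : ι → ZMod p // e ≠ 0}) : ∃ q : ℕ, q.Prime ∧ N + ∏ i, ℓ i < q ∧
      ∀ x : ZMod q, x ^ p ≠ ∏ i, (ℓ i : ZMod q) ^ (e.1 i).val := by
    refine exists_prime_forall_pow_ne hp hℓ hinj ?_ _
    obtain ⟨i, hi⟩ := Function.ne_iff.mp e.2
    exact ⟨i, by rwa [← CharP.cast_eq_zero_iff (ZMod p), ZMod.natCast_zmod_val]⟩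
  choose q hq hN hpow using hlocal
  refine ⟨∏ e, q e, fun r hr hrQ => ?_, fun v hv => ?_⟩
  · obtain ⟨e, -, hre⟩ := (hr.prime.dvd_finsetProd_iff _).mp hrQ
    rw [(Nat.prime_dvd_prime_iff_eq hr (hq e)).mp hre]
    exact (Nat.le_add_right _ _).trans_lt (hN e)
  · by_contra! hcon
    let e : {e : ι → ZMod p // e ≠ 0} := ⟨fun i => (v i : ZMod p), fun h0 => by
      obtain ⟨i, hi⟩ := hcon
      exact hi ((ZMod.intCast_zmod_eq_zero_iff_dvd _ _).mp (congrFun h0 i))⟩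
    have := Fact.mk (hq e)
    obtain ⟨x, hx⟩ := hv (q e) this (Finset.dvd_prod_of_mem q (Finset.mem_univ e))
    have hunit (i : ι) : (ℓ i : ZMod (q e)) ≠ 0 := fun h0 => by
      have hle := Nat.le_of_dvd (hℓ i).pos ((CharP.cast_eq_zero_iff (ZMod (q e)) (q e) _).mp h0)
      have := Finset.single_le_prod' (f := ℓ) (fun j _ => (hℓ j).one_le) (Finset.mem_univ i)
      have := hN e
      omega
    refine hpow e (x * ∏ i, (ℓ i : ZMod (q e)) ^ (-(v i / p))) ?_
    rw [mul_pow, hx, ← Finset.prod_pow, ← Finset.prod_mul_distrib]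
    refine Finset.prod_congr rfl fun i _ => ?_
    rw [← zpow_natCast, ← zpow_natCast, ← zpow_mul, ← zpow_add₀ (hunit i), ZMod.val_intCast]
    congr 1
    linarith [Int.emod_add_mul_ediv (v i) p]

end LocalPowers

section Octic

/-- The octic of the theorem, in the parameter `A = (yⁿ - 481) / 144`; its value at `2` is
`144 A + 481 = yⁿ`. -/
noncomputable def octic (A : ℤ) : ℤ[X] :=
  X ^ 8 + C (4 * A) * X ^ 6 - C (8 * A - 14) * X ^ 4 + C (4 * A) * X ^ 2 + 1

theorem natDegree_octic (A : ℤ) : (octic A).natDegree = 8 := by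
  unfold octic
  compute_degree!

theorem monic_octic (A : ℤ) : (octic A).Monic := by
  unfold octic
  monicity!

theorem aeval_octic {R : Type*} [CommRing R] (A : ℤ) (x : R) :
    aeval x (octic A) = x ^ 8 + 4 * A * x ^ 6 - (8 * A - 14) * x ^ 4 + 4 * A * x ^ 2 + 1 := by
  simp only [octic, map_add, map_sub, map_mul, map_pow, map_one, map_ofNat, aeval_X, eq_intCast,
    map_intCast]

variable {F : Type*} [Field F] {A : ℤ} {x : F}

/-- The eight conjugates `±x^{±1}`, `±((x - 1) / (x + 1))^{±1}` of a root `x` of the octic,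
indexed so that `DihedralGroup 4` acts on the right: see `dihedralConj_dihedralConj`. -/
def dihedralConj (x : F) : DihedralGroup 4 → F
  | .r i => (![x, (x - 1) / (x + 1), -x⁻¹, -((x + 1) / (x - 1))] : Fin 4 → F) i
  | .sr i => (![-x, (x + 1) / (x - 1), x⁻¹, -((x - 1) / (x + 1))] : Fin 4 → F) i

theorem dihedralConj_one (x : F) : dihedralConj x 1 = x :=
  rfl

theorem map_dihedralConj {E : Type*} [Field E] (φ : F →+* E) (x : F) (a : DihedralGroup 4) :
    φ (dihedralConj x a) = dihedralConj (φ x) a := by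
  rcases a with i | i <;> fin_cases i <;> simp [dihedralConj]

@[to_additive sum_dihedralGroup_four]
theorem prod_dihedralGroup_four {M : Type*} [CommMonoid M] (f : DihedralGroup 4 → M) :
    ∏ a, f a = (∏ i : Fin 4, f (.r i)) * ∏ i : Fin 4, f (.sr i) := by
  rw [← DihedralGroup.equivSum.symm.prod_comp, Fintype.prod_sum_type]
  rfl

theorem ne_of_aeval_octic_eq_zero (h2 : (2 : F) ≠ 0) (hx : aeval x (octic A) = 0) :
    x ≠ 0 ∧ x - 1 ≠ 0 ∧ x + 1 ≠ 0 := by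
  rw [aeval_octic] at hx
  have h16 : (16 : F) ≠ 0 := by
    rw [show (16 : F) = 2 ^ 4 by norm_num]
    exact pow_ne_zero 4 h2
  refine ⟨?_, fun h => h16 ?_, fun h => h16 ?_⟩
  · rintro rfl
    simp at hx
  · obtain rfl : x = 1 := sub_eq_zero.mp h
    linear_combination hx
  · obtain rfl : x = -1 := eq_neg_of_add_eq_zero_left h
    linear_combination hx

theorem prod_sub_dihedralConj (h2 : (2 : F) ≠ 0) (hx : aeval x (octic A) = 0) (t : F) :
    ∏ a, (t - dihedralConj x a) = aeval t (octic A) := by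
  obtain ⟨h0, h1, h1'⟩ := ne_of_aeval_octic_eq_zero h2 hx
  rw [aeval_octic] at hx ⊢
  let w (z : F) := z ^ 2 + (z⁻¹) ^ 2
  have hquartic {z : F} (hz : z ≠ 0) :
      (t - z) * (t - -z) * ((t - z⁻¹) * (t - -z⁻¹)) = t ^ 4 - w z * t ^ 2 + 1 := by
    simp only [w]
    field_simp
    ring
  let z := (x - 1) / (x + 1)
  have hadd : w x + w z = -4 * A := by
    simp only [w, z]
    field_simp
    linear_combination hx
  have hmul : w x * w z = 12 - 8 * A := by
    simp only [w, z]
    field_simp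
    linear_combination 2 * hx
  have hinv : (x + 1) / (x - 1) = z⁻¹ := (inv_div _ _).symm
  have hprod : ∏ a, (t - dihedralConj x a) =
      (t - x) * (t - -x) * ((t - x⁻¹) * (t - -x⁻¹)) *
        ((t - z) * (t - -z) * ((t - z⁻¹) * (t - -z⁻¹))) := by
    rw [prod_dihedralGroup_four]
    simp only [Fin.prod_univ_four, dihedralConj, Matrix.cons_val, hinv]
    ring
  rw [hprod, hquartic h0, hquartic (div_ne_zero h1 h1')]
  linear_combination t ^ 4 * hmul - (t ^ 6 + t ^ 2) * hadd

theorem aeval_octic_eq_zero_iff (h2 : (2 : F) ≠ 0) (hx : aeval x (octic A) = 0) {t : F} :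
    aeval t (octic A) = 0 ↔ ∃ a, t = dihedralConj x a := by
  simp only [← prod_sub_dihedralConj h2 hx, Finset.prod_eq_zero_iff, Finset.mem_univ, true_and,
    sub_eq_zero]

theorem aeval_octic_dihedralConj (h2 : (2 : F) ≠ 0) (hx : aeval x (octic A) = 0)
    (a : DihedralGroup 4) : aeval (dihedralConj x a) (octic A) = 0 :=
  (aeval_octic_eq_zero_iff h2 hx).mpr ⟨a, rfl⟩

theorem dihedralConj_mul_r_one (h2 : (2 : F) ≠ 0) (hx : aeval x (octic A) = 0)
    (a : DihedralGroup 4) :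
    dihedralConj x (a * .r 1) = (dihedralConj x a - 1) / (dihedralConj x a + 1) := by
  obtain ⟨h0, h1, h1'⟩ := ne_of_aeval_octic_eq_zero h2 hx
  have hne := (ne_of_aeval_octic_eq_zero h2 (aeval_octic_dihedralConj h2 hx a)).2.2
  have hr (i : ZMod 4) : dihedralConj x (.r i * .r 1) =
      (![(x - 1) / (x + 1), -x⁻¹, -((x + 1) / (x - 1)), x] : Fin 4 → F) i := by
    fin_cases i <;> rfl
  have hsr (i : ZMod 4) : dihedralConj x (.sr i * .r 1) =
      (![(x + 1) / (x - 1), x⁻¹, -((x - 1) / (x + 1)), -x] : Fin 4 → F) i := by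
    fin_cases i <;> rfl
  rw [eq_div_iff hne]
  rcases a with i | i <;> [rw [hr]; rw [hsr]] <;> fin_cases i <;> simp [dihedralConj] <;>
    field_simp <;> ring

theorem dihedralConj_mul_sr_zero (x : F) (a : DihedralGroup 4) :
    dihedralConj x (a * .sr 0) = -dihedralConj x a := by
  have hr (i : ZMod 4) : dihedralConj x (.r i * .sr 0) =
      (![-x, -((x - 1) / (x + 1)), x⁻¹, (x + 1) / (x - 1)] : Fin 4 → F) i := by
    fin_cases i <;> rfl
  have hsr (i : ZMod 4) : dihedralConj x (.sr i * .sr 0) =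
      (![x, -((x + 1) / (x - 1)), -x⁻¹, (x - 1) / (x + 1)] : Fin 4 → F) i := by
    fin_cases i <;> rfl
  rcases a with i | i <;> [rw [hr]; rw [hsr]] <;> fin_cases i <;> simp [dihedralConj]

theorem dihedralConj_dihedralConj (h2 : (2 : F) ≠ 0) (hx : aeval x (octic A) = 0)
    (a b : DihedralGroup 4) : dihedralConj (dihedralConj x a) b = dihedralConj x (a * b) := by
  have hrot (k : ℕ) :
      dihedralConj (dihedralConj x a) (.r 1 ^ k) = dihedralConj x (a * .r 1 ^ k) := by
    induction k with
    | zero => simp only [pow_zero, dihedralConj_one, mul_one]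
    | succ k ih =>
      rw [pow_succ, dihedralConj_mul_r_one h2 (aeval_octic_dihedralConj h2 hx a), ih,
        ← dihedralConj_mul_r_one h2 hx, mul_assoc]
  have hgen : ∃ k : ℕ, b = .r 1 ^ k ∨ b = .r 1 ^ k * .sr 0 := by
    simp only [DihedralGroup.r_one_pow]
    rcases b with i | i
    · exact ⟨i.val, .inl (by simp)⟩
    · exact ⟨(-i).val, .inr (by simp)⟩
  obtain ⟨k, rfl | rfl⟩ := hgen
  · exact hrot k
  · rw [dihedralConj_mul_sr_zero, hrot, ← dihedralConj_mul_sr_zero, mul_assoc]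

/-- Half the difference of `x` and `x⁻¹`; up to sign and inversion it is fixed by the dihedral
action. -/
def halfSubInv (x : F) : F :=
  (x ^ 2 - 1) / (2 * x)

/-- A square root of `1 - A`, for `x` a root of the octic. -/
def quadGen₁ (x : F) : F :=
  halfSubInv x + (halfSubInv x)⁻¹

/-- A square root of `-A - 3`, for `x` a root of the octic. -/
def quadGen₂ (x : F) : F :=
  halfSubInv x - (halfSubInv x)⁻¹

/-- The sign by which the dihedral action multiplies `quadGen₁`. -/
def quadSign₁ : DihedralGroup 4 → ℤ
  | .r i => (-1) ^ i.val
  | .sr i => -(-1) ^ i.val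

/-- The sign by which the dihedral action multiplies `quadGen₂`. -/
def quadSign₂ : DihedralGroup 4 → ℤ
  | .r _ => 1
  | .sr _ => -1

theorem quadSign₁_eq_or : ∀ a, quadSign₁ a = 1 ∨ quadSign₁ a = -1 := by
  decide

theorem quadSign₂_eq_or : ∀ a, quadSign₂ a = 1 ∨ quadSign₂ a = -1 := by
  decide

theorem halfSubInv_ne_zero (h2 : (2 : F) ≠ 0) (hx : aeval x (octic A) = 0) :
    halfSubInv x ≠ 0 := by
  obtain ⟨h0, h1, h1'⟩ := ne_of_aeval_octic_eq_zero h2 hx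
  refine div_ne_zero ?_ (mul_ne_zero h2 h0)
  rw [show x ^ 2 - 1 = (x - 1) * (x + 1) by ring]
  exact mul_ne_zero h1 h1'

theorem quadGen₁_sq (h2 : (2 : F) ≠ 0) (hx : aeval x (octic A) = 0) :
    quadGen₁ x ^ 2 = 1 - A := by
  have hm := halfSubInv_ne_zero h2 hx
  have h0 := (ne_of_aeval_octic_eq_zero h2 hx).1
  have hsq : x ^ 2 - 1 ≠ 0 := (div_ne_zero_iff.mp hm).1
  rw [aeval_octic] at hx
  simp only [quadGen₁, halfSubInv]
  field_simp
  linear_combination hx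

theorem quadGen₂_sq (h2 : (2 : F) ≠ 0) (hx : aeval x (octic A) = 0) :
    quadGen₂ x ^ 2 = -A - 3 := by
  have hinv := mul_inv_cancel₀ (halfSubInv_ne_zero h2 hx)
  have hsq := quadGen₁_sq h2 hx
  simp only [quadGen₁, quadGen₂] at hsq ⊢
  linear_combination hsq - 4 * hinv

theorem map_quadGen₁ {E : Type*} [Field E] (φ : F →+* E) (x : F) :
    φ (quadGen₁ x) = quadGen₁ (φ x) := by
  simp only [quadGen₁, halfSubInv, map_add, map_sub, map_div₀, map_mul, map_inv₀, map_pow, map_one,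
    map_ofNat]

theorem map_quadGen₂ {E : Type*} [Field E] (φ : F →+* E) (x : F) :
    φ (quadGen₂ x) = quadGen₂ (φ x) := by
  simp only [quadGen₂, halfSubInv, map_sub, map_div₀, map_mul, map_inv₀, map_pow, map_one,
    map_ofNat]

theorem quadGen_dihedralConj (h2 : (2 : F) ≠ 0) (hx : aeval x (octic A) = 0)
    (a : DihedralGroup 4) :
    quadGen₁ (dihedralConj x a) = quadSign₁ a * quadGen₁ x ∧
      quadGen₂ (dihedralConj x a) = quadSign₂ a * quadGen₂ x := by
  obtain ⟨h0, h1, h1'⟩ := ne_of_aeval_octic_eq_zero h2 hx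
  have hsq : x ^ 2 - 1 ≠ 0 := (div_ne_zero_iff.mp (halfSubInv_ne_zero h2 hx)).1
  let m := halfSubInv x
  have hr (i : ZMod 4) : halfSubInv (dihedralConj x (.r i)) =
      (![m, -m⁻¹, m, -m⁻¹] : Fin 4 → F) i := by
    fin_cases i <;> simp [dihedralConj, halfSubInv, m] <;> field_simp <;> ring
  have hsr (i : ZMod 4) : halfSubInv (dihedralConj x (.sr i)) =
      (![-m, m⁻¹, -m, m⁻¹] : Fin 4 → F) i := by
    fin_cases i <;> simp [dihedralConj, halfSubInv, m] <;> field_simp <;> ring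
  simp only [quadGen₁, quadGen₂]
  rcases a with i | i <;> simp only [hr, hsr] <;> fin_cases i <;>
    simp [quadSign₁, quadSign₂, ZMod.val, m] <;> ring_nf <;> simp

theorem eq_one_of_intCast_mul_eq_self (h2 : (2 : F) ≠ 0) {s : F} (hs : s ≠ 0) {e : ℤ}
    (he : e = 1 ∨ e = -1) (h : e * s = s) : e = 1 := by
  refine he.resolve_right fun hneg => mul_ne_zero h2 hs ?_
  rw [hneg, Int.cast_neg, Int.cast_one] at h
  linear_combination -h

theorem quadGen₁_ne_zero (h2 : (2 : F) ≠ 0) (hx : aeval x (octic A) = 0) (hA1 : (A : F) ≠ 1) :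
    quadGen₁ x ≠ 0 :=
  fun h => hA1 (by linear_combination quadGen₁_sq h2 hx - quadGen₁ x * h)

theorem quadGen₂_ne_zero (h2 : (2 : F) ≠ 0) (hx : aeval x (octic A) = 0) (hA3 : (A : F) ≠ -3) :
    quadGen₂ x ≠ 0 :=
  fun h => hA3 (by linear_combination quadGen₂_sq h2 hx - quadGen₂ x * h)

theorem sq_ne_neg_one_of_octic (h2 : (2 : F) ≠ 0) (hx : aeval x (octic A) = 0)
    (hA1 : (A : F) ≠ 1) : x ^ 2 ≠ -1 := by
  intro hsq
  refine mul_ne_zero (pow_ne_zero 4 h2) (sub_ne_zero.mpr hA1) ?_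
  rw [aeval_octic, show x ^ 8 = (x ^ 2) ^ 4 by ring, show x ^ 6 = (x ^ 2) ^ 3 by ring,
    show x ^ 4 = (x ^ 2) ^ 2 by ring, hsq] at hx
  linear_combination -hx

theorem eq_one_of_dihedralConj_eq_self (h2 : (2 : F) ≠ 0) (hx : aeval x (octic A) = 0)
    (hA1 : (A : F) ≠ 1) (hA3 : (A : F) ≠ -3) {a : DihedralGroup 4} (ha : dihedralConj x a = x) :
    a = 1 := by
  obtain ⟨h₁, h₂⟩ := quadGen_dihedralConj h2 hx a
  rw [ha] at h₁ h₂
  have e₁ := eq_one_of_intCast_mul_eq_self h2 (quadGen₁_ne_zero h2 hx hA1) (quadSign₁_eq_or a)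
    h₁.symm
  have e₂ := eq_one_of_intCast_mul_eq_self h2 (quadGen₂_ne_zero h2 hx hA3) (quadSign₂_eq_or a)
    h₂.symm
  have hker : ∀ a, quadSign₁ a = 1 → quadSign₂ a = 1 → a ≠ 1 → a = .r 2 := by decide
  by_contra hne
  obtain rfl := hker a e₁ e₂ hne
  have hinv : x⁻¹ = -x := neg_eq_iff_eq_neg.mp ha
  have hmul := mul_inv_cancel₀ (ne_of_aeval_octic_eq_zero h2 hx).1
  rw [hinv] at hmul
  exact sq_ne_neg_one_of_octic h2 hx hA1 (by linear_combination -hmul)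

theorem dihedralConj_injective (h2 : (2 : F) ≠ 0) (hx : aeval x (octic A) = 0)
    (hA1 : (A : F) ≠ 1) (hA3 : (A : F) ≠ -3) : Function.Injective (dihedralConj x) := by
  intro a b hab
  have hfix := congrArg (dihedralConj · b⁻¹) hab
  simp only [dihedralConj_dihedralConj h2 hx, mul_inv_cancel, dihedralConj_one] at hfix
  exact mul_inv_eq_one.mp (eq_one_of_dihedralConj_eq_self h2 hx hA1 hA3 hfix)

-- On the roots, the octic is `4 x² (x² - 1)² (A + (m + m⁻¹)² - 1)` with `m = halfSubInv x`.
theorem aeval_derivative_octic (h2 : (2 : F) ≠ 0) (hx : aeval x (octic A) = 0) :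
    aeval x (derivative (octic A)) =
      8 * x * (x ^ 2 - 1) * (x ^ 2 + 1) * quadGen₁ x * quadGen₂ x := by
  have h0 := (ne_of_aeval_octic_eq_zero h2 hx).1
  have hsq : x ^ 2 - 1 ≠ 0 := (div_ne_zero_iff.mp (halfSubInv_ne_zero h2 hx)).1
  rw [aeval_octic] at hx
  have hder : aeval x (derivative (octic A)) =
      8 * x ^ 7 + 24 * A * x ^ 5 - 4 * (8 * A - 14) * x ^ 3 + 8 * A * x := by
    simp [octic, map_ofNat]
    ring
  rw [hder]
  simp only [quadGen₁, quadGen₂, halfSubInv]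
  field_simp
  linear_combination 4 * (6 * x ^ 2 - 2) * hx

theorem aeval_derivative_octic_ne_zero (h2 : (2 : F) ≠ 0) (hx : aeval x (octic A) = 0)
    (hA1 : (A : F) ≠ 1) (hA3 : (A : F) ≠ -3) : aeval x (derivative (octic A)) ≠ 0 := by
  obtain ⟨h0, -, -⟩ := ne_of_aeval_octic_eq_zero h2 hx
  have hsq : x ^ 2 - 1 ≠ 0 := (div_ne_zero_iff.mp (halfSubInv_ne_zero h2 hx)).1
  have hsq' : x ^ 2 + 1 ≠ 0 := fun h =>
    sq_ne_neg_one_of_octic h2 hx hA1 (eq_neg_of_add_eq_zero_left h)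
  have h8 : (8 : F) ≠ 0 := by
    rw [show (8 : F) = 2 ^ 3 by norm_num]
    exact pow_ne_zero 3 h2
  rw [aeval_derivative_octic h2 hx]
  exact mul_ne_zero (mul_ne_zero (mul_ne_zero (mul_ne_zero (mul_ne_zero h8 h0) hsq) hsq')
    (quadGen₁_ne_zero h2 hx hA1)) (quadGen₂_ne_zero h2 hx hA3)

end Octic

section GaloisGroup

theorem dihedralGroup_four_subgroup_eq_top {H : Subgroup (DihedralGroup 4)}
    (h₁ : ∃ a ∈ H, quadSign₁ a = -1) (h₂ : ∃ a ∈ H, quadSign₂ a = -1)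
    (h₁₂ : ∃ a ∈ H, quadSign₁ a * quadSign₂ a = -1) : H = ⊤ := by
  obtain ⟨a, ha, ha₁⟩ := h₁
  obtain ⟨b, hb, hb₂⟩ := h₂
  obtain ⟨c, hc, hc₁₂⟩ := h₁₂
  have hrot : ∀ a c, quadSign₁ a = -1 → quadSign₁ c * quadSign₂ c = -1 →
      .r 1 = a ∨ .r 1 = a⁻¹ ∨ .r 1 = c ∨ .r 1 = c⁻¹ ∨ .r 1 = a * c ∨ .r 1 = c * a := by
    decide
  have hr : .r 1 ∈ H := by
    rcases hrot a c ha₁ hc₁₂ with h | h | h | h | h | h <;> rw [h]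
    exacts [ha, inv_mem ha, hc, inv_mem hc, mul_mem ha hc, mul_mem hc ha]
  have hgen : ∀ b g, quadSign₂ b = -1 →
      ∃ k : Fin 4, g = .r 1 ^ (k : ℕ) ∨ g = b * .r 1 ^ (k : ℕ) := by
    decide
  refine (Subgroup.eq_top_iff' H).mpr fun g => ?_
  obtain ⟨k, rfl | rfl⟩ := hgen b g hb₂
  exacts [pow_mem hr _, mul_mem hb (pow_mem hr _)]

variable {K : Type*} [Field K] [Algebra ℚ K] {A : ℤ} {x : K}

/-- The octic over `ℚ`. -/
noncomputable abbrev octicRat (A : ℤ) : ℚ[X] :=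
  (octic A).map (algebraMap ℤ ℚ)

theorem isSplittingField_octic (hx : aeval x (octic A) = 0) (hgen : Algebra.adjoin ℚ {x} = ⊤) :
    (octicRat A).IsSplittingField ℚ K := by
  have := algebraRat.charZero K
  have hprod : (octicRat A).map (algebraMap ℚ K) = ∏ a, (X - C (dihedralConj x a)) := by
    refine Polynomial.funext fun t => ?_
    rw [eval_map_algebraMap, aeval_map_algebraMap, eval_prod,
      ← prod_sub_dihedralConj two_ne_zero hx]
    simp only [eval_sub, eval_X, eval_C]
  refine ⟨hprod ▸ Splits.prod fun a _ => Splits.X_sub_C _, ?_⟩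
  rw [eq_top_iff, ← hgen]
  refine Algebra.adjoin_mono (Set.singleton_subset_iff.mpr (mem_rootSet.mpr ⟨?_, ?_⟩))
  · exact ((monic_octic A).map _).ne_zero
  · rw [aeval_map_algebraMap, hx]

theorem exists_galToDihedral (hA : 1 < A) (hx : aeval x (octic A) = 0)
    (hgen : Algebra.adjoin ℚ {x} = ⊤) :
    ∃ θ : (K ≃ₐ[ℚ] K) →* DihedralGroup 4,
      Function.Injective θ ∧ ∀ g, g x = dihedralConj x (θ g) := by
  have := algebraRat.charZero K
  have h2 : (2 : K) ≠ 0 := two_ne_zero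
  have hinj : Function.Injective (dihedralConj x) := dihedralConj_injective h2 hx
    (by exact_mod_cast hA.ne') (by exact_mod_cast (show A ≠ -3 by omega))
  have hexists (g : K ≃ₐ[ℚ] K) : ∃ a, g x = dihedralConj x a := by
    rw [← aeval_octic_eq_zero_iff h2 hx]
    exact (aeval_algHom_apply (g.toRingEquiv : K →+* K).toIntAlgHom x (octic A)).trans
      (by rw [hx, map_zero])
  choose θ hθ using hexists
  refine ⟨MonoidHom.mk' θ fun g h => hinj ?_, fun g h hgh => ?_, hθ⟩
  · rw [← hθ, AlgEquiv.mul_apply, hθ h, ← dihedralConj_dihedralConj h2 hx, ← hθ g]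
    exact map_dihedralConj (g : K →+* K) x (θ h)
  · refine AlgEquiv.coe_toAlgHom_injective (AlgHom.ext_of_adjoin_eq_top hgen ?_)
    rintro z rfl
    exact (hθ g).trans ((congrArg _ hgh).trans (hθ h).symm)

theorem exists_sign_eq_neg_one [FiniteDimensional ℚ K] [IsGalois ℚ K] {s : K} {d : ℤ}
    (hs : s ^ 2 = d) (hd : ¬ IsSquare d) {σ : (K ≃ₐ[ℚ] K) → ℤ} (hσ : ∀ g, σ g = 1 ∨ σ g = -1)
    (h : ∀ g, g s = σ g * s) : ∃ g, σ g = -1 := by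
  have := algebraRat.charZero K
  by_contra! hcon
  obtain ⟨r, hr⟩ := (IsGalois.mem_range_algebraMap_iff_fixed s).mpr fun g => by
    rw [h, (hσ g).resolve_right (hcon g), Int.cast_one, one_mul]
  refine hd (Rat.isSquare_intCast_iff.mp ⟨r, (algebraMap ℚ K).injective ?_⟩)
  rw [map_mul, hr, ← sq, hs, map_intCast]

-- The product lies strictly between `A ^ 2` and `(A + 1) ^ 2`.
theorem not_isSquare_one_sub_mul_neg_sub_three (hA : 1 < A) :
    ¬ IsSquare ((1 - A) * (-A - 3)) := by
  rintro ⟨r, hr⟩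
  have hlt : |r| < A + 1 := abs_lt_of_sq_lt_sq (by nlinarith) (by omega)
  nlinarith [abs_mul_abs_self r, abs_nonneg r]

theorem bijective_galToDihedral [FiniteDimensional ℚ K] [IsGalois ℚ K] (hA : 1 < A)
    (hx : aeval x (octic A) = 0) {θ : (K ≃ₐ[ℚ] K) →* DihedralGroup 4}
    (hinj : Function.Injective θ) (hθ : ∀ g, g x = dihedralConj x (θ g)) :
    Function.Bijective θ := by
  have := algebraRat.charZero K
  have h2 : (2 : K) ≠ 0 := two_ne_zero
  have hg₁ (g : K ≃ₐ[ℚ] K) : g (quadGen₁ x) = quadSign₁ (θ g) * quadGen₁ x := by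
    rw [← (quadGen_dihedralConj h2 hx (θ g)).1, ← hθ]
    exact map_quadGen₁ (g : K →+* K) x
  have hg₂ (g : K ≃ₐ[ℚ] K) : g (quadGen₂ x) = quadSign₂ (θ g) * quadGen₂ x := by
    rw [← (quadGen_dihedralConj h2 hx (θ g)).2, ← hθ]
    exact map_quadGen₂ (g : K →+* K) x
  have hsq₁ : quadGen₁ x ^ 2 = (1 - A : ℤ) := by
    rw [quadGen₁_sq h2 hx]
    push_cast
    rfl
  have hsq₂ : quadGen₂ x ^ 2 = (-A - 3 : ℤ) := by
    rw [quadGen₂_sq h2 hx]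
    push_cast
    rfl
  have hns₁ : ¬ IsSquare (1 - A) := fun h => by linarith [h.nonneg]
  have hns₂ : ¬ IsSquare (-A - 3) := fun h => by linarith [h.nonneg]
  refine ⟨hinj, MonoidHom.range_eq_top.mp (dihedralGroup_four_subgroup_eq_top ?_ ?_ ?_)⟩
  · obtain ⟨g, hg⟩ := exists_sign_eq_neg_one hsq₁ hns₁ (fun g => quadSign₁_eq_or (θ g)) hg₁
    exact ⟨_, ⟨g, rfl⟩, hg⟩
  · obtain ⟨g, hg⟩ := exists_sign_eq_neg_one hsq₂ hns₂ (fun g => quadSign₂_eq_or (θ g)) hg₂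
    exact ⟨_, ⟨g, rfl⟩, hg⟩
  · have hsq₁₂ : (quadGen₁ x * quadGen₂ x) ^ 2 = ((1 - A) * (-A - 3) : ℤ) := by
      rw [mul_pow, hsq₁, hsq₂, Int.cast_mul]
    have hsign : ∀ a, quadSign₁ a * quadSign₂ a = 1 ∨ quadSign₁ a * quadSign₂ a = -1 := by
      decide
    have hns₁₂ := not_isSquare_one_sub_mul_neg_sub_three hA
    obtain ⟨g, hg⟩ := exists_sign_eq_neg_one hsq₁₂ hns₁₂ (fun g => hsign (θ g)) fun g => by
      rw [map_mul, hg₁, hg₂, Int.cast_mul, mul_mul_mul_comm]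
    exact ⟨_, ⟨g, rfl⟩, hg⟩

theorem octic_galois_structure (hA : 1 < A) (hx : aeval x (octic A) = 0)
    (hgen : Algebra.adjoin ℚ {x} = ⊤) :
    Module.finrank ℚ K = 8 ∧ IsGalois ℚ K ∧ Nonempty ((K ≃ₐ[ℚ] K) ≃* DihedralGroup 4) := by
  have := isSplittingField_octic hx hgen
  have : FiniteDimensional ℚ K := IsSplittingField.finiteDimensional K (octicRat A)
  have : Normal ℚ K := Normal.of_isSplittingField (octicRat A)
  have hgal : IsGalois ℚ K := ⟨⟩
  obtain ⟨θ, hinj, hθ⟩ := exists_galToDihedral hA hx hgen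
  let e := MulEquiv.ofBijective θ (bijective_galToDihedral hA hx hinj hθ)
  refine ⟨?_, hgal, ⟨e⟩⟩
  rw [← IsGalois.card_aut_eq_finrank, Nat.card_congr e.toEquiv, DihedralGroup.nat_card]

theorem minpoly_eq_octic (hA : 1 < A) (hx : aeval x (octic A) = 0)
    (hgen : Algebra.adjoin ℚ {x} = ⊤) : minpoly ℚ x = octicRat A := by
  have hfin := (octic_galois_structure hA hx hgen).1
  have : FiniteDimensional ℚ K := .of_finrank_pos (by omega)
  have hint : IsIntegral ℚ x := .of_finite ℚ x
  have hdeg : (minpoly ℚ x).natDegree = 8 := by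
    rw [← hfin, ← (Field.primitive_element_iff_minpoly_natDegree_eq ℚ x).mp]
    exact IntermediateField.adjoin_eq_top_of_algebra ℚ _ hgen
  refine (eq_of_monic_of_dvd_of_natDegree_le (minpoly.monic hint) ((monic_octic A).map _)
    (minpoly.dvd ℚ x ?_) ?_).symm
  · rw [aeval_map_algebraMap, hx]
  · rw [hdeg, (monic_octic A).natDegree_map, natDegree_octic]

theorem totallyImaginary_of_octic {F : Type*} [Field F] {x : F} (h2 : (2 : F) ≠ 0) (hA : 1 < A)
    (hx : aeval x (octic A) = 0) : TotallyImaginary F := by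
  intro φ
  refine ⟨quadGen₁ x, fun him => ?_⟩
  have hsq := congrArg (Complex.re ∘ φ) (quadGen₁_sq h2 hx)
  simp [sq, him] at hsq
  have : (1 : ℝ) < A := by exact_mod_cast hA
  nlinarith [mul_self_nonneg (φ (quadGen₁ x)).re]

end GaloisGroup

section ClassGroup

variable {R ι : Type*} [CommRing R] [Fintype ι] {n : ℕ} {b : ι → R}

theorem exists_span_singleton_eq_pow [IsDedekindDomain R] {y : R}
    (hprod : ∏ i, b i = y ^ n) (hcop : Pairwise fun i j => IsCoprime (b i) (b j)) (i : ι) :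
    ∃ I : Ideal R, Ideal.span {b i} = I ^ n := by
  classical
  let _ : GCDMonoid (Ideal R) := UniqueFactorizationMonoid.toGCDMonoid _
  refine Finset.exists_eq_pow_of_mul_eq_pow_of_coprime (c := Ideal.span {y})
    (fun i _ j _ hij => Ideal.isCoprime_span_singleton_iff _ _ |>.mpr (hcop hij)) ?_ i
    (Finset.mem_univ i)
  rw [Ideal.prod_span_singleton, hprod, Ideal.span_singleton_pow]

theorem exists_prod_pow_mul_unit_eq_pow [IsDomain R] {p m : ℕ} {I : ι → Ideal R}
    (hI : ∀ i, Ideal.span {b i} = I i ^ (p * m)) {e : ι → ℕ}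
    (hprin : (∏ i, (I i ^ m) ^ e i).IsPrincipal) :
    ∃ (u : Rˣ) (γ : R), (∏ i, b i ^ e i) * u = γ ^ p := by
  obtain ⟨γ, hγ⟩ := hprin.principal
  suffices h : Ideal.span {∏ i, b i ^ e i} = Ideal.span {γ ^ p} by
    obtain ⟨u, hu⟩ := Ideal.span_singleton_eq_span_singleton.mp h
    exact ⟨u, γ, hu⟩
  rw [← Ideal.span_singleton_pow, ← Ideal.submodule_span_eq (s := {γ}), ← hγ, ← Finset.prod_pow,
    ← Ideal.prod_span_singleton]
  refine Finset.prod_congr rfl fun i _ => ?_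
  rw [← Ideal.span_singleton_pow, hI, mul_comm p, pow_mul, pow_right_comm]

theorem hasZModRankGE_card_sub_one {M : Type*} [CommGroup M] (hn : n ≠ 0) (c : ι → M)
    (hc : ∀ i, c i ^ n = 1) (j : ι)
    (h : ∀ p : ℕ, p.Prime → p ∣ n → ∀ e : ι → ℕ, ∏ i, (c i ^ (n / p)) ^ e i = 1 →
      ∀ i, e i ≡ e j [MOD p]) : HasZModRankGE M n (Fintype.card ι - 1) := by
  classical
  rw [← show Fintype.card {i // i ≠ j} = Fintype.card ι - 1 from Set.card_ne_eq j]
  refine hasZModRankGE_card_of_prime_power_relations hn (fun i : {i // i ≠ j} => c i)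
    (fun i => hc i) fun p hp hpn f hf i => ?_
  have : NeZero p := ⟨hp.ne_zero⟩
  let e (i : ι) : ℕ := if hi : i ≠ j then (f ⟨i, hi⟩ : ZMod p).val else 0
  have he (i : {i // i ≠ j}) : (e i : ZMod p) = f i := by
    simp only [e, dif_pos i.2, ZMod.natCast_val, ZMod.cast_id', id_eq, Subtype.coe_eta]
  have hpow (i : {i // i ≠ j}) : (c i ^ (n / p)) ^ e i = (c i ^ (n / p)) ^ f i := by
    have hord : orderOf (c i ^ (n / p)) ∣ p := orderOf_dvd_of_pow_eq_one (by
      rw [← pow_mul, Nat.div_mul_cancel hpn, hc])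
    rw [← zpow_natCast, zpow_eq_zpow_iff_modEq]
    exact ((ZMod.intCast_eq_intCast_iff _ _ _).mp (by rw [Int.cast_natCast, he])).of_dvd
      (Int.natCast_dvd_natCast.mpr hord)
  have hej : e j = 0 := by simp only [e, ne_eq, not_true_eq_false, dite_false]
  have hrel := h p hp hpn e (by
    rw [Fintype.prod_eq_mul_prod_subtype_ne _ j, hej, pow_zero, one_mul, ← hf]
    exact Finset.prod_congr rfl fun i _ => hpow i) i
  rw [hej, ← ZMod.natCast_eq_natCast_iff, he, Nat.cast_zero] at hrel
  exact (ZMod.intCast_zmod_eq_zero_iff_dvd _ _).mp hrel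

-- The factor `b j` of `y ^ n` is dropped because it is a product of the others up to `n`-th powers.
theorem hasZModRankGE_classGroup [IsDedekindDomain R] (hn : n ≠ 0) {y : R} (hy : y ≠ 0)
    (hprod : ∏ i, b i = y ^ n) (hcop : Pairwise fun i j => IsCoprime (b i) (b j)) (j : ι)
    (h : ∀ p : ℕ, p.Prime → p ∣ n → ∀ (e : ι → ℕ) (u : Rˣ) (γ : R),
      (∏ i, b i ^ e i) * u = γ ^ p → ∀ i, e i ≡ e j [MOD p]) :
    HasZModRankGE (ClassGroup R) n (Fintype.card ι - 1) := by
  have hb (i : ι) : b i ≠ 0 := fun hi =>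
    pow_ne_zero n hy (hprod ▸ Finset.prod_eq_zero (Finset.mem_univ i) hi)
  choose I hI using exists_span_singleton_eq_pow hprod hcop
  have hI0 (i : ι) : I i ∈ nonZeroDivisors (Ideal R) := by
    refine mem_nonZeroDivisors_of_ne_zero fun h0 => hb i ?_
    have hi := hI i
    rwa [h0, zero_pow hn, Ideal.zero_eq_bot, Ideal.span_singleton_eq_bot] at hi
  refine hasZModRankGE_card_sub_one hn (fun i => ClassGroup.mk0 ⟨I i, hI0 i⟩) (fun i => ?_) j
    fun p hp hpn e he => ?_
  · rw [← map_pow]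
    refine (ClassGroup.mk0_eq_one_iff (pow_mem (hI0 i) n)).mpr ?_
    rw [← hI]
    infer_instance
  · obtain ⟨m, rfl⟩ := hpn
    rw [Nat.mul_div_cancel_left m hp.pos] at he
    simp only [← map_pow, ← map_prod] at he
    have hprin {J : nonZeroDivisors (Ideal R)} (hJ : ClassGroup.mk0 J = 1) :
        (J : Ideal R).IsPrincipal := (ClassGroup.mk0_eq_one_iff J.2).mp hJ
    replace he := hprin he
    simp only [SubmonoidClass.coe_finsetProd, SubmonoidClass.coe_pow] at he
    obtain ⟨u, γ, hγ⟩ := exists_prod_pow_mul_unit_eq_pow hI he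
    exact h p hp (dvd_mul_right p m) e u γ hγ

end ClassGroup

section Units

theorem eq_one_of_pow_eq_one_of_ringHom {R F : Type*} [CommRing R] [IsDomain R] [Field F]
    (ρ : R →+* F) {p : ℕ} (hp : (p : F) ≠ 0) (hF : ∀ c : F, c ^ p = 1 → c = 1) {z : R}
    (hz : z ^ p = 1) : z = 1 := by
  by_contra hne
  have hgeom : ∑ i ∈ Finset.range p, z ^ i = 0 := by
    have h := geom_sum_mul z p
    rw [hz, sub_self] at h
    exact (mul_eq_zero.mp h).resolve_right (sub_ne_zero.mpr hne)
  apply hp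
  have h := congrArg ρ hgeom
  simpa only [map_sum, map_pow, hF (ρ z) (by rw [← map_pow, hz, map_one]), one_pow, map_zero,
    Finset.sum_const, Finset.card_range, nsmul_eq_mul, mul_one] using h

theorem eq_one_of_pow_eq_one_zmod {p q : ℕ} [Fact q.Prime] (hpq : p.Coprime (q - 1)) (hp : p ≠ 0)
    {c : ZMod q} (hc : c ^ p = 1) : c = 1 := by
  have hc0 : c ≠ 0 := by
    rintro rfl
    exact zero_ne_one ((zero_pow hp).symm.trans hc)
  have h := pow_gcd_eq_one.mpr ⟨hc, ZMod.pow_card_sub_one_eq_one hc0⟩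
  rwa [hpq.gcd_eq_one, pow_one] at h

variable {K : Type*} [Field K] [NumberField K]

theorem exists_torsion_pow_eq {p : ℕ} (hroot : ∀ z : 𝓞 K, z ^ p = 1 → z = 1)
    (t : Units.torsion K) : ∃ s, s ^ p = t := by
  have hinj : Function.Injective (powMonoidHom p : Units.torsion K →* Units.torsion K) :=
    (injective_iff_map_eq_one _).mpr fun s hs => by
      have h := congrArg (fun s : Units.torsion K => ((s : (𝓞 K)ˣ) : 𝓞 K)) hs
      exact Subtype.ext (Units.ext (hroot _ (by simpa using h)))
  exact (Finite.injective_iff_surjective.mp hinj) t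

theorem exists_unit_eq_prod_zpow_mul_pow {ι : Type*} [Fintype ι]
    (hι : Fintype.card ι = Units.rank K) {p : ℕ} [Fact p.Prime]
    (hroot : ∀ z : 𝓞 K, z ^ p = 1 → z = 1) (ε : ι → (𝓞 K)ˣ)
    (hε : ∀ (f : ι → ℤ) (w : (𝓞 K)ˣ), ∏ i, ε i ^ f i = w ^ p → ∀ i, (p : ℤ) ∣ f i)
    (u : (𝓞 K)ˣ) : ∃ (f : ι → ℤ) (w : (𝓞 K)ˣ), u = (∏ i, ε i ^ f i) * w ^ p := by
  let e : ι ≃ Fin (Units.rank K) := Fintype.equivFinOfCardEq hι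
  refine exists_eq_prod_zpow_mul_pow (fun i => Units.fundSystem K (e i)) ε (fun v => ?_) hε u
  obtain ⟨⟨t, f⟩, hv, -⟩ := Units.exist_unique_eq_mul_prod K v
  obtain ⟨s, rfl⟩ := exists_torsion_pow_eq hroot t
  refine ⟨f ∘ e, s, ?_⟩
  rw [hv, mul_comm, ← e.prod_comp]
  rfl

theorem units_rank_eq_of_totallyImaginary (hK : TotallyImaginary K) :
    Units.rank K = Module.finrank ℚ K / 2 - 1 := by
  have : IsTotallyComplex K := ⟨fun v => by
    rw [InfinitePlace.isComplex_iff]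
    intro hreal
    obtain ⟨z, hz⟩ := hK v.embedding
    have hconj := RingHom.congr_fun (ComplexEmbedding.isReal_iff.mp hreal) z
    exact hz (Complex.conj_eq_iff_im.mp hconj)⟩
  rw [Units.rank, InfinitePlace.card_eq_nrRealPlaces_add_nrComplexPlaces,
    IsTotallyComplex.nrRealPlaces_eq_zero, IsTotallyComplex.finrank K, zero_add,
    Nat.mul_div_cancel_left _ two_pos]

end Units

section OcticIntegers

variable {K F : Type*} [Field K] [Field F] {A : ℤ} {θ : 𝓞 K}

theorem isIntegral_of_octic {x : K} (hx : aeval x (octic A) = 0) : IsIntegral ℤ x :=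
  ⟨octic A, monic_octic A, by rwa [← aeval_def]⟩

theorem aeval_coe_octic (hθ : aeval θ (octic A) = 0) : aeval (θ : K) (octic A) = 0 := by
  rw [aeval_algebraMap_apply, hθ, map_zero]

theorem aeval_map_octic {R S : Type*} [CommRing R] [CommRing S] (ρ : R →+* S) {x : R}
    (hx : aeval x (octic A) = 0) : aeval (ρ x) (octic A) = 0 := by
  rw [← RingHom.toIntAlgHom_apply, aeval_algHom_apply, hx, map_zero]

variable [CharZero K]

/-- The conjugates `dihedralConj θ` of an integral root `θ` of the octic, as integers of `K`. -/
def octicConj (hθ : aeval θ (octic A) = 0) (a : DihedralGroup 4) : 𝓞 K :=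
  ⟨dihedralConj (θ : K) a,
    isIntegral_of_octic (aeval_octic_dihedralConj two_ne_zero (aeval_coe_octic hθ) a)⟩

theorem coe_octicConj (hθ : aeval θ (octic A) = 0) (a : DihedralGroup 4) :
    (octicConj hθ a : K) = dihedralConj (θ : K) a :=
  rfl

theorem map_octicConj (hθ : aeval θ (octic A) = 0) (h2 : (2 : F) ≠ 0) (ρ : 𝓞 K →+* F)
    (a : DihedralGroup 4) : ρ (octicConj hθ a) = dihedralConj (ρ θ) a := by
  obtain ⟨h0, h1, h1'⟩ := ne_of_aeval_octic_eq_zero two_ne_zero (aeval_coe_octic hθ)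
  obtain ⟨k0, k1, k1'⟩ := ne_of_aeval_octic_eq_zero h2 (aeval_map_octic ρ hθ)
  have hr (i : Fin 4) : octicConj hθ (.r i) * (![1, θ + 1, θ, θ - 1] : Fin 4 → 𝓞 K) i =
      (![θ, θ - 1, -1, -θ - 1] : Fin 4 → 𝓞 K) i := by
    apply RingOfIntegers.coe_injective
    fin_cases i <;> simp [coe_octicConj, dihedralConj] <;> field_simp
    ring
  have hsr (i : Fin 4) : octicConj hθ (.sr i) * (![1, θ - 1, θ, θ + 1] : Fin 4 → 𝓞 K) i =
      (![-θ, θ + 1, 1, 1 - θ] : Fin 4 → 𝓞 K) i := by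
    apply RingOfIntegers.coe_injective
    fin_cases i <;> simp [coe_octicConj, dihedralConj] <;> field_simp
    ring
  rcases a with i | i
  · have h := congrArg ρ (hr i)
    rw [map_mul] at h
    fin_cases i <;> simp [dihedralConj] at h ⊢ <;> grind
  · have h := congrArg ρ (hsr i)
    rw [map_mul] at h
    fin_cases i <;> simp [dihedralConj] at h ⊢ <;> grind

theorem prod_octicConj_sub_two (hθ : aeval θ (octic A) = 0) :
    ∏ a, (octicConj hθ a - 2) = ((144 * A + 481 : ℤ) : 𝓞 K) := by
  apply RingOfIntegers.coe_injective
  have hswap : ∏ a, (dihedralConj (θ : K) a - 2) = ∏ a, (2 - dihedralConj (θ : K) a) := by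
    simp_rw [← neg_sub (2 : K), Finset.prod_neg]
    rw [Finset.card_univ, ← Nat.card_eq_fintype_card, DihedralGroup.nat_card]
    norm_num
  rw [map_prod, map_intCast]
  simp only [map_sub, coe_octicConj, map_ofNat]
  rw [hswap, prod_sub_dihedralConj two_ne_zero (aeval_coe_octic hθ), aeval_octic]
  push_cast
  ring

theorem intCast_ne_zero_of_octic_two_eq_zero (hA : IsCoprime (144 * A + 481) 35)
    (h : ((144 * A + 481 : ℤ) : F) = 0) {m : ℤ} (hm : m ∣ 210) : (m : F) ≠ 0 := by
  have h6 : IsCoprime (144 * A + 481) 6 := ⟨1, -(24 * A + 80), by ring⟩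
  have hunit := ((hA.mul_right h6).of_isCoprime_of_dvd_right hm).map (Int.castRingHom F)
  rw [eq_intCast, eq_intCast, h, isCoprime_zero_left] at hunit
  exact hunit.ne_zero

theorem ne_of_octic_two_eq_zero (hA : IsCoprime (144 * A + 481) 35)
    (h : ((144 * A + 481 : ℤ) : F) = 0) :
    (2 : F) ≠ 0 ∧ (A : F) ≠ 1 ∧ (A : F) ≠ -3 := by
  have hne {m : ℤ} (hm : m ∣ 210) : (m : F) ≠ 0 := intCast_ne_zero_of_octic_two_eq_zero hA h hm
  push_cast at h
  refine ⟨by exact_mod_cast hne (m := 2) (by norm_num), fun h1 => hne (m := 5) (by norm_num) ?_,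
    fun h3 => hne (m := 7) (by norm_num) ?_⟩
  · rw [h1] at h
    exact eq_zero_of_pow_eq_zero (n := 4) (by push_cast; linear_combination h)
  · rw [h3] at h
    exact eq_zero_of_pow_eq_zero (n := 2) (by push_cast; linear_combination h)

theorem pairwise_isCoprime_octicConj_sub_two (hθ : aeval θ (octic A) = 0)
    (hA : IsCoprime (144 * A + 481) 35) :
    Pairwise fun a b => IsCoprime (octicConj hθ a - 2) (octicConj hθ b - 2) := by
  intro a b hab
  by_contra hcop
  rw [← Ideal.isCoprime_span_singleton_iff, Ideal.isCoprime_iff_sup_eq] at hcop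
  obtain ⟨P, hP, hle⟩ := Ideal.exists_le_maximal _ hcop
  let _ := Ideal.Quotient.field P
  let ρ := Ideal.Quotient.mk P
  have hmem : octicConj hθ a - 2 ∈ P ∧ octicConj hθ b - 2 ∈ P := by
    simpa [Ideal.span_singleton_le_iff_mem] using hle
  have hprod : ((144 * A + 481 : ℤ) : 𝓞 K ⧸ P) = 0 := by
    rw [← map_intCast ρ, ← prod_octicConj_sub_two hθ, map_prod]
    exact Finset.prod_eq_zero (Finset.mem_univ a) (Ideal.Quotient.eq_zero_iff_mem.mpr hmem.1)
  obtain ⟨h2, hA1, hA3⟩ := ne_of_octic_two_eq_zero hA hprod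
  refine hab (dihedralConj_injective h2 (aeval_map_octic ρ hθ) hA1 hA3 ?_)
  rw [← map_octicConj hθ h2, ← map_octicConj hθ h2]
  exact Ideal.Quotient.eq.mpr (by simpa using P.sub_mem hmem.1 hmem.2)

theorem octicConj_mul_inv (hθ : aeval θ (octic A) = 0) (a : DihedralGroup 4) :
    octicConj hθ a * octicConj hθ (a * .sr 2) = 1 := by
  have hx := aeval_coe_octic hθ
  apply RingOfIntegers.coe_injective
  change dihedralConj (θ : K) a * dihedralConj (θ : K) (a * .sr 2) = 1
  rw [← dihedralConj_dihedralConj two_ne_zero hx]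
  exact mul_inv_cancel₀
    (ne_of_aeval_octic_eq_zero two_ne_zero (aeval_octic_dihedralConj two_ne_zero hx a)).1

/-- The conjugates of `θ` as units of `𝓞 K`. -/
def octicConjUnit (hθ : aeval θ (octic A) = 0) (a : DihedralGroup 4) : (𝓞 K)ˣ :=
  Units.mkOfMulEqOne _ _ (octicConj_mul_inv hθ a)

theorem half_add_inv_quartic {x : K} (hx : aeval x (octic A) = 0) :
    ((x + x⁻¹) / 2) ^ 4 + (A - 1) * ((x + x⁻¹) / 2) ^ 2 + (1 - A) = 0 := by
  have h0 := (ne_of_aeval_octic_eq_zero two_ne_zero hx).1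
  rw [aeval_octic] at hx
  field_simp
  linear_combination hx

theorem isIntegral_half_add_inv {x : K} (hx : aeval x (octic A) = 0) :
    IsIntegral ℤ ((x + x⁻¹) / 2) := by
  refine ⟨X ^ 4 + C (A - 1) * X ^ 2 + C (1 - A), by monicity!, ?_⟩
  rw [← half_add_inv_quartic hx]
  simp only [eval₂_add, eval₂_mul, eval₂_pow, eval₂_X, eval₂_C, algebraMap_int_eq,
    Int.coe_castRingHom, Int.cast_sub, Int.cast_one]

/-- The integer `(θ + θ⁻¹) / 2` of `K`. -/
def octicHalfTrace (hθ : aeval θ (octic A) = 0) : 𝓞 K :=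
  ⟨((θ : K) + (θ : K)⁻¹) / 2, isIntegral_half_add_inv (aeval_coe_octic hθ)⟩

theorem coe_octicHalfTrace (hθ : aeval θ (octic A) = 0) :
    (octicHalfTrace hθ : K) = ((θ : K) + (θ : K)⁻¹) / 2 :=
  rfl

theorem octicHalfTrace_quartic (hθ : aeval θ (octic A) = 0) :
    octicHalfTrace hθ ^ 4 + (A - 1) * octicHalfTrace hθ ^ 2 + (1 - A) = 0 := by
  apply RingOfIntegers.coe_injective
  simpa [coe_octicHalfTrace] using half_add_inv_quartic (aeval_coe_octic hθ)

theorem two_mul_octicHalfTrace_mul (hθ : aeval θ (octic A) = 0) :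
    2 * octicHalfTrace hθ * θ = θ ^ 2 + 1 := by
  have h0 := (ne_of_aeval_octic_eq_zero two_ne_zero (aeval_coe_octic hθ)).1
  apply RingOfIntegers.coe_injective
  simp only [map_mul, map_add, map_pow, map_one, map_ofNat, coe_octicHalfTrace]
  field_simp

/-- The unit `(θ + θ⁻¹) / 2 - 1 = (θ - 1)² / (2 θ)` of `𝓞 K`. -/
def octicHalfTraceUnit (hθ : aeval θ (octic A) = 0) : (𝓞 K)ˣ :=
  Units.mkOfMulEqOne (octicHalfTrace hθ - 1)
    (-((octicHalfTrace hθ + 1) * (octicHalfTrace hθ ^ 2 + A)))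
    (by linear_combination -octicHalfTrace_quartic hθ)

/-- Three independent units of `𝓞 K`, a full set up to finite index. -/
def octicUnits (hθ : aeval θ (octic A) = 0) : Fin 3 → (𝓞 K)ˣ :=
  ![octicConjUnit hθ 1, octicConjUnit hθ (.sr 1), octicHalfTraceUnit hθ]

/-- The units `octicUnits` as functions of the root `x` of the octic. -/
def octicUnitFun (x : F) : Fin 3 → F :=
  ![x, (x + 1) / (x - 1), (x - 1) ^ 2 / (2 * x)]

theorem map_octicUnits (hθ : aeval θ (octic A) = 0) (h2 : (2 : F) ≠ 0) (ρ : 𝓞 K →+* F)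
    (i : Fin 3) : ρ (octicUnits hθ i) = octicUnitFun (ρ θ) i := by
  have h0 := (ne_of_aeval_octic_eq_zero h2 (aeval_map_octic ρ hθ)).1
  fin_cases i
  · exact map_octicConj hθ h2 ρ 1
  · exact map_octicConj hθ h2 ρ (.sr 1)
  · have h := congrArg ρ (two_mul_octicHalfTrace_mul hθ)
    simp only [map_mul, map_add, map_pow, map_one, map_ofNat] at h
    change ρ (octicHalfTrace hθ - 1) = (ρ θ - 1) ^ 2 / (2 * ρ θ)
    rw [eq_div_iff (mul_ne_zero h2 h0), map_sub, map_one]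
    linear_combination h

theorem map_prod_octicUnits_zpow (hθ : aeval θ (octic A) = 0) (h2 : (2 : F) ≠ 0)
    (ρ : 𝓞 K →+* F) (f : Fin 3 → ℤ) :
    ρ (∏ i, octicUnits hθ i ^ f i : (𝓞 K)ˣ) = ∏ i, octicUnitFun (ρ θ) i ^ f i := by
  change (Units.map (ρ : 𝓞 K →* F) (∏ i, octicUnits hθ i ^ f i) : F) = _
  simp only [map_prod, map_zpow, Units.coe_prod, Units.val_zpow_eq_zpow_val, Units.coe_map,
    MonoidHom.coe_coe, map_octicUnits hθ h2]

end OcticIntegers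

theorem exists_pow_mul_eq_of_mul_eq_pow {O : Type*} [CommRing O] [IsDomain O]
    [IsIntegrallyClosed O] {p m : ℕ} (hp : p ≠ 0) {b s y w γ : O} (hy : y ≠ 0)
    (hs : IsUnit s) (hbs : b * s = y ^ p) (hγ : b ^ m * w = γ ^ p) : ∃ d, d ^ p * s ^ m = w := by
  have heq : γ ^ p * s ^ m = (y ^ m) ^ p * w := by
    rw [← hγ, ← pow_mul, mul_comm m, pow_mul, ← hbs]
    ring
  have hdvd : (y ^ m) ^ p ∣ γ ^ p := ((hs.pow m).dvd_mul_right).mp (heq ▸ dvd_mul_right _ _)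
  obtain ⟨d, rfl⟩ := (IsIntegrallyClosed.pow_dvd_pow_iff hp).mp hdvd
  refine ⟨d, mul_left_cancel₀ (pow_ne_zero p (pow_ne_zero m hy)) ?_⟩
  rw [← heq]
  ring

theorem isUnit_of_toZMod_ne_zero {q : ℕ} [Fact q.Prime] {z : ℤ_[q]}
    (hz : PadicInt.toZMod z ≠ 0) : IsUnit z := by
  rwa [ne_eq, ← RingHom.mem_ker, PadicInt.ker_toZMod, IsLocalRing.mem_maximalIdeal,
    mem_nonunits_iff, not_not] at hz

/-- All but one factor of the `p`-th power `∏ i, b i` are units; solving for the remaining factor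
`b j` turns a multiplicative relation modulo `p`-th powers into one between units, which can be
reduced modulo `q`. -/
theorem exists_zmod_pow_eq_prod_zpow_sub {ι : Type*} [Fintype ι] {p q : ℕ}
    [Fact q.Prime] (hp : p ≠ 0) {b : ι → ℤ_[q]} {Y u γ : ℤ_[q]} (hY : Y ≠ 0)
    (hprod : ∏ i, b i = Y ^ p) {e : ι → ℕ} (hrel : (∏ i, b i ^ e i) * u = γ ^ p) {j : ι}
    (hb : ∀ i ≠ j, PadicInt.toZMod (b i) ≠ 0) :
    ∃ d : ZMod q,
      d ^ p = (∏ i, PadicInt.toZMod (b i) ^ (e i - e j : ℤ)) * PadicInt.toZMod u := by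
  classical
  have hunit : IsUnit (∏ i ∈ Finset.univ.erase j, b i) :=
    IsUnit.prod_iff.mpr fun i hi => isUnit_of_toZMod_ne_zero (hb i (Finset.ne_of_mem_erase hi))
  rw [← Finset.mul_prod_erase _ _ (Finset.mem_univ j)] at hprod
  rw [← Finset.mul_prod_erase _ _ (Finset.mem_univ j), mul_assoc] at hrel
  obtain ⟨d, hd⟩ := exists_pow_mul_eq_of_mul_eq_pow hp hY hunit hprod hrel
  refine ⟨PadicInt.toZMod d, ?_⟩
  have hne : (∏ i ∈ Finset.univ.erase j, PadicInt.toZMod (b i)) ^ e j ≠ 0 := by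
    rw [← map_prod]
    exact pow_ne_zero _ (hunit.map PadicInt.toZMod).ne_zero
  rw [← Finset.mul_prod_erase _ _ (Finset.mem_univ j), sub_self, zpow_zero, one_mul]
  apply mul_right_cancel₀ hne
  have hmod := congrArg PadicInt.toZMod hd
  simp only [map_mul, map_pow, map_prod] at hmod
  rw [hmod, mul_right_comm, ← Finset.prod_pow, ← Finset.prod_mul_distrib]
  congr 1
  refine Finset.prod_congr rfl fun i hi => ?_
  rw [← zpow_natCast _ (e j), ← zpow_add₀ (hb i (Finset.ne_of_mem_erase hi)), sub_add_cancel,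
    zpow_natCast]

section LocalRelation

variable {K : Type*} [Field K] [NumberField K] {A : ℤ} {θ : 𝓞 K} {p q : ℕ} [Fact q.Prime]

theorem aeval_two_octic_zmod (hq : ((144 * A + 481 : ℤ) : ZMod q) = 0) :
    aeval (2 : ZMod q) (octic A) = 0 := by
  rw [aeval_octic]
  push_cast at hq
  linear_combination hq

/-- Modulo a prime `q` dividing its value at `2`, the octic splits with roots the conjugates of `2`,
so each of these is the reduction of a `q`-adic place. -/
theorem exists_padicInt_hom_octic (hA : 1 < A) (hA35 : IsCoprime (144 * A + 481) 35)
    (hθ : aeval θ (octic A) = 0) (hgen : Algebra.adjoin ℚ {(θ : K)} = ⊤)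
    (hq : ((144 * A + 481 : ℤ) : ZMod q) = 0) (h : DihedralGroup 4) :
    ∃ ψ : 𝓞 K →+* ℤ_[q], PadicInt.toZMod (ψ θ) = dihedralConj 2 h := by
  obtain ⟨h2, hA1, hA3⟩ := ne_of_octic_two_eq_zero hA35 hq
  have hroot := aeval_octic_dihedralConj h2 (aeval_two_octic_zmod hq) h
  exact exists_ringOfIntegers_padicInt_hom (IntermediateField.adjoin_eq_top_of_algebra ℚ _ hgen)
    (minpoly_eq_octic hA (aeval_coe_octic hθ) hgen) hroot
    (aeval_derivative_octic_ne_zero h2 hroot hA1 hA3)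

theorem exists_zmod_pow_eq_of_octicConj_relation (hA : 1 < A)
    (hA35 : IsCoprime (144 * A + 481) 35) (hθ : aeval θ (octic A) = 0)
    (hgen : Algebra.adjoin ℚ {(θ : K)} = ⊤) (hq : ((144 * A + 481 : ℤ) : ZMod q) = 0)
    (hp : p ≠ 0) {Y : ℕ} (hY : Y ≠ 0) (hAY : 144 * A + 481 = (Y : ℤ) ^ p)
    {e : DihedralGroup 4 → ℕ} {f : Fin 3 → ℤ} {γ : 𝓞 K}
    (hrel : (∏ a, (octicConj hθ a - 2) ^ e a) * (∏ i, octicUnits hθ i ^ f i : (𝓞 K)ˣ) = γ ^ p)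
    (g : DihedralGroup 4) :
    ∃ d : ZMod q, d ^ p = (∏ k, (dihedralConj 2 k - 2) ^ (e (g * k) - e g : ℤ)) *
      ∏ i, octicUnitFun (dihedralConj 2 g⁻¹) i ^ f i := by
  obtain ⟨h2, hA1, hA3⟩ := ne_of_octic_two_eq_zero hA35 hq
  have htwo := aeval_two_octic_zmod hq
  obtain ⟨ψ, hψ⟩ := exists_padicInt_hom_octic hA hA35 hθ hgen hq g⁻¹
  let ρ : 𝓞 K →+* ZMod q := PadicInt.toZMod.comp ψ
  have hρ (a) : ρ (octicConj hθ a - 2) = dihedralConj 2 (g⁻¹ * a) - 2 := by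
    rw [map_sub, map_ofNat, map_octicConj hθ h2, ← dihedralConj_dihedralConj h2 htwo, ← hψ]
    rfl
  have hne (a) (ha : a ≠ g) : ρ (octicConj hθ a - 2) ≠ 0 := by
    rw [hρ, sub_ne_zero]
    intro h
    rw [← dihedralConj_one (2 : ZMod q)] at h
    exact ha (inv_mul_eq_one.mp (dihedralConj_injective h2 htwo hA1 hA3 h)).symm
  have hprod : ∏ a, ψ (octicConj hθ a - 2) = (Y : ℤ_[q]) ^ p := by
    rw [← map_prod, prod_octicConj_sub_two, hAY, Int.cast_pow, map_pow, Int.cast_natCast,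
      map_natCast]
  have hrel' : (∏ a, ψ (octicConj hθ a - 2) ^ e a) *
      ψ (∏ i, octicUnits hθ i ^ f i : (𝓞 K)ˣ) = ψ γ ^ p := by
    rw [← map_pow, ← hrel]
    simp only [map_mul, map_prod, map_pow]
  obtain ⟨d, hd⟩ :=
    exists_zmod_pow_eq_prod_zpow_sub hp (Nat.cast_ne_zero.mpr hY) hprod hrel' hne
  refine ⟨d, hd.trans ?_⟩
  change (∏ a, ρ (octicConj hθ a - 2) ^ (e a - e g : ℤ)) * ρ _ = _
  rw [map_prod_octicUnits_zpow hθ h2 ρ, show ρ θ = _ from hψ, ← Equiv.prod_comp (Equiv.mulLeft g)]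
  simp only [hρ, Equiv.coe_mulLeft, inv_mul_cancel_left]

end LocalRelation

section ExponentTables

/-- The exponents of `2, 3, 5, 7` in `±(dihedralConj 2 k - 2)`, set to `0` for `k = 1` where this
number vanishes. -/
def shiftExponent : DihedralGroup 4 → Fin 4 → ℤ
  | .r i => (![![0, 0, 0, 0], ![0, -1, 1, 0], ![-1, 0, 1, 0], ![0, 0, 1, 0]] :
      Fin 4 → Fin 4 → ℤ) i
  | .sr i => (![![2, 0, 0, 0], ![0, 0, 0, 0], ![-1, 1, 0, 0], ![0, -1, 0, 1]] :
      Fin 4 → Fin 4 → ℤ) i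

/-- The exponents of `2, 3, 5, 7` in `±octicUnitFun (dihedralConj 2 g) j`. -/
def unitExponent : DihedralGroup 4 → Fin 3 → Fin 4 → ℤ
  | .r i => (![![![1, 0, 0, 0], ![0, 1, 0, 0], ![-2, 0, 0, 0]],
      ![![0, -1, 0, 0], ![1, 0, 0, 0], ![1, -1, 0, 0]],
      ![![-1, 0, 0, 0], ![0, -1, 0, 0], ![-2, 2, 0, 0]],
      ![![0, 1, 0, 0], ![-1, 0, 0, 0], ![3, -1, 0, 0]]] : Fin 4 → Fin 3 → Fin 4 → ℤ) i
  | .sr i => (![![![1, 0, 0, 0], ![0, -1, 0, 0], ![-2, 2, 0, 0]],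
      ![![0, 1, 0, 0], ![1, 0, 0, 0], ![1, -1, 0, 0]],
      ![![-1, 0, 0, 0], ![0, 1, 0, 0], ![-2, 0, 0, 0]],
      ![![0, -1, 0, 0], ![-1, 0, 0, 0], ![3, -1, 0, 0]]] : Fin 4 → Fin 3 → Fin 4 → ℤ) i

variable {F : Type*} [Field F]

theorem dihedralConj_two_r (i : ZMod 4) :
    dihedralConj (2 : F) (.r i) = (![2, 3⁻¹, -2⁻¹, -3] : Fin 4 → F) i := by
  fin_cases i <;> norm_num [dihedralConj]

theorem dihedralConj_two_sr (i : ZMod 4) :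
    dihedralConj (2 : F) (.sr i) = (![-2, 3, 2⁻¹, -3⁻¹] : Fin 4 → F) i := by
  fin_cases i <;> norm_num [dihedralConj]

theorem sq_dihedralConj_two_sub_two (h2 : (2 : F) ≠ 0) (h3 : (3 : F) ≠ 0) {k : DihedralGroup 4}
    (hk : k ≠ 1) :
    (dihedralConj (2 : F) k - 2) ^ 2 =
      ∏ i, ((![2, 3, 5, 7] : Fin 4 → ℕ) i : F) ^ (2 * shiftExponent k i) := by
  rcases k with i | i <;> [rw [dihedralConj_two_r]; rw [dihedralConj_two_sr]] <;> fin_cases i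
  · exact absurd rfl hk
  all_goals
    simp [Fin.prod_univ_four, shiftExponent, zpow_neg]
    field_simp
    norm_num

theorem sq_octicUnitFun_dihedralConj_two (h2 : (2 : F) ≠ 0) (h3 : (3 : F) ≠ 0)
    (g : DihedralGroup 4) (j : Fin 3) :
    octicUnitFun (dihedralConj (2 : F) g) j ^ 2 =
      ∏ i, ((![2, 3, 5, 7] : Fin 4 → ℕ) i : F) ^ (2 * unitExponent g j i) := by
  have h4 : (4 : F) ≠ 0 := by convert pow_ne_zero 2 h2; norm_num
  have h9 : (9 : F) ≠ 0 := by convert pow_ne_zero 2 h3; norm_num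
  have h16 : (16 : F) ≠ 0 := by convert pow_ne_zero 2 h4; norm_num
  have h36 : (36 : F) ≠ 0 := by convert mul_ne_zero h4 h9; norm_num
  rcases g with i | i <;> [rw [dihedralConj_two_r]; rw [dihedralConj_two_sr]] <;>
    fin_cases i <;> fin_cases j <;>
    simp [Fin.prod_univ_four, octicUnitFun, unitExponent, zpow_neg] <;>
    ring_nf <;> field_simp <;> norm_num [div_eq_iff, h4, h9, h16, h36]

/-- The `7`-part shows that `e` is invariant under `sr 3` and the `5`-part that it is constant on
cosets of the rotations; the exponents of the units are then read off at `sr 0` and `sr 2`. -/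
theorem eq_and_eq_zero_of_exponent_relations (h2 : (2 : F) ≠ 0) {e : DihedralGroup 4 → F}
    {f : Fin 3 → F}
    (h : ∀ g i, ∑ k, (shiftExponent k i : F) * (e (g * k) - e g) +
      ∑ j, f j * (unitExponent g⁻¹ j i : F) = 0) :
    (∀ g, e g = e 1) ∧ ∀ j, f j = 0 := by
  have h4 : (4 : F) ≠ 0 := by convert pow_ne_zero 2 h2; norm_num
  have hunit : ∀ g j, unitExponent g j 2 = 0 ∧ unitExponent g j 3 = 0 := by decide
  have h7 (g) : e (g * .sr 3) = e g := by
    have h := h g 3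
    simp [sum_dihedralGroup_four, Fin.sum_univ_four, shiftExponent, hunit] at h
    linear_combination h
  have h5 (g) : e (g * .r 1) + e (g * .r 2) + e (g * .r 3) = 3 * e g := by
    have h := h g 2
    simp [sum_dihedralGroup_four, Fin.sum_univ_four, shiftExponent, hunit] at h
    linear_combination h
  have hr (i : ZMod 4) : e (.r i) = e 1 := by
    have h0 : e (.r 1) + e (.r 2) + e (.r 3) = 3 * e 1 := h5 1
    have h1 : e (.r 2) + e (.r 3) + e 1 = 3 * e (.r 1) := h5 (.r 1)
    have h2 : e (.r 3) + e 1 + e (.r 1) = 3 * e (.r 2) := h5 (.r 2)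
    have h3 : e 1 + e (.r 1) + e (.r 2) = 3 * e (.r 3) := h5 (.r 3)
    have h1' : e (.r 1) = e 1 := mul_left_cancel₀ h4 (by linear_combination h0 - h1)
    have h2' : e (.r 2) = e 1 := mul_left_cancel₀ h4 (by linear_combination h0 - h2)
    have h3' : e (.r 3) = e 1 := mul_left_cancel₀ h4 (by linear_combination h0 - h3)
    fin_cases i
    exacts [rfl, h1', h2', h3']
  have he (g) : e g = e 1 := by
    rcases g with i | i
    · exact hr i
    · rw [← h7, DihedralGroup.sr_mul_sr, hr]
  refine ⟨he, ?_⟩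
  simp only [he, sub_self, mul_zero, Finset.sum_const_zero, zero_add, Fin.sum_univ_three] at h
  have h0 : f 0 * (1 : ℤ) + f 1 * (0 : ℤ) + f 2 * (-2 : ℤ) = 0 := h (.sr 0) 0
  have h1 : f 0 * (0 : ℤ) + f 1 * (1 : ℤ) + f 2 * (0 : ℤ) = 0 := h (.sr 2) 1
  have h2 : f 0 * (-1 : ℤ) + f 1 * (0 : ℤ) + f 2 * (-2 : ℤ) = 0 := h (.sr 2) 0
  push_cast at h0 h1 h2
  have hf1 : f 1 = 0 := by linear_combination h1
  have hf2 : f 2 = 0 := (mul_eq_zero.mp (by linear_combination -h0 - h2)).resolve_left h4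
  exact Fin.forall_fin_succ.mpr
    ⟨by linear_combination h0 + 2 * hf2, Fin.forall_fin_two.mpr ⟨hf1, hf2⟩⟩

theorem zpow_sum_of_ne_zero {G ι : Type*} [CommGroupWithZero G] {a : G} (ha : a ≠ 0)
    (s : Finset ι) (v : ι → ℤ) : a ^ ∑ i ∈ s, v i = ∏ i ∈ s, a ^ v i := by
  classical
  induction s using Finset.induction_on with
  | empty => simp
  | insert i s hi ih => rw [Finset.sum_insert hi, Finset.prod_insert hi, zpow_add₀ ha, ih]

theorem sq_prod_dihedralConj_two (hℓ : ∀ i, ((![2, 3, 5, 7] : Fin 4 → ℕ) i : F) ≠ 0)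
    (g : DihedralGroup 4) {m : DihedralGroup 4 → ℤ} (hm : m 1 = 0) (f : Fin 3 → ℤ) :
    ((∏ k, (dihedralConj (2 : F) k - 2) ^ m k) *
        ∏ j, octicUnitFun (dihedralConj (2 : F) g) j ^ f j) ^ 2 =
      ∏ i, ((![2, 3, 5, 7] : Fin 4 → ℕ) i : F) ^
        (2 * (∑ k, shiftExponent k i * m k + ∑ j, f j * unitExponent g j i)) := by
  have h2 : (2 : F) ≠ 0 := by exact_mod_cast hℓ 0
  have h3 : (3 : F) ≠ 0 := by exact_mod_cast hℓ 1
  have hshift (k) : ((dihedralConj (2 : F) k - 2) ^ m k) ^ 2 =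
      ∏ i, ((![2, 3, 5, 7] : Fin 4 → ℕ) i : F) ^ (2 * (shiftExponent k i * m k)) := by
    obtain rfl | hk := eq_or_ne k 1
    · simp only [hm, zpow_zero, one_pow, mul_zero, Finset.prod_const_one]
    · rw [← zpow_natCast, zpow_comm, zpow_natCast, sq_dihedralConj_two_sub_two h2 h3 hk,
        ← Finset.prod_zpow]
      simp only [← zpow_mul, mul_assoc]
  have hunit (j) : (octicUnitFun (dihedralConj (2 : F) g) j ^ f j) ^ 2 =
      ∏ i, ((![2, 3, 5, 7] : Fin 4 → ℕ) i : F) ^ (2 * (f j * unitExponent g j i)) := by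
    rw [← zpow_natCast, zpow_comm, zpow_natCast, sq_octicUnitFun_dihedralConj_two h2 h3,
      ← Finset.prod_zpow]
    simp only [← zpow_mul, mul_assoc, mul_comm (f j)]
  simp only [mul_pow, ← Finset.prod_pow, hshift, hunit]
  rw [Finset.prod_comm, Finset.prod_comm (s := (Finset.univ : Finset (Fin 3))),
    ← Finset.prod_mul_distrib]
  refine Finset.prod_congr rfl fun i _ => ?_
  rw [mul_add, zpow_add₀ (hℓ i), Finset.mul_sum, Finset.mul_sum, zpow_sum_of_ne_zero (hℓ i),
    zpow_sum_of_ne_zero (hℓ i)]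

end ExponentTables

section ClassGroup

variable {K : Type*} [Field K] [NumberField K] {A : ℤ} {θ : 𝓞 K}

theorem modEq_and_dvd_of_octicConj_relation {p : ℕ} [Fact p.Prime] (hp2 : p ≠ 2) (hA : 1 < A)
    (hA35 : IsCoprime (144 * A + 481) 35) (hθ : aeval θ (octic A) = 0)
    (hgen : Algebra.adjoin ℚ {(θ : K)} = ⊤) {Y : ℕ} (hY : Y ≠ 0)
    (hAY : 144 * A + 481 = (Y : ℤ) ^ p) (hind : LocallyIndependent ![2, 3, 5, 7] p Y)
    {e : DihedralGroup 4 → ℕ} {f : Fin 3 → ℤ} {γ : 𝓞 K}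
    (hrel : (∏ a, (octicConj hθ a - 2) ^ e a) * (∏ i, octicUnits hθ i ^ f i : (𝓞 K)ˣ) = γ ^ p) :
    (∀ g, e g ≡ e 1 [MOD p]) ∧ ∀ j, (p : ℤ) ∣ f j := by
  have hp := (Fact.out : p.Prime)
  have h2p : (2 : ZMod p) ≠ 0 := by
    rw [← Nat.cast_ofNat, Ne, CharP.cast_eq_zero_iff (ZMod p) p]
    exact fun h => hp2 ((Nat.prime_dvd_prime_iff_eq hp Nat.prime_two).mp h)
  have hdvd (g : DihedralGroup 4) : ∀ i : Fin 4, (p : ℤ) ∣ 2 *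
      (∑ k, shiftExponent k i * (e (g * k) - e g : ℤ) + ∑ j, f j * unitExponent g⁻¹ j i) := by
    refine hind _ fun q _ hqY => ?_
    have hq : ((144 * A + 481 : ℤ) : ZMod q) = 0 := by
      rw [hAY, ZMod.intCast_zmod_eq_zero_iff_dvd]
      exact (Int.natCast_dvd_natCast.mpr hqY).trans (dvd_pow_self _ hp.ne_zero)
    have hℓ (i) : ((![2, 3, 5, 7] : Fin 4 → ℕ) i : ZMod q) ≠ 0 := by
      have hi := intCast_ne_zero_of_octic_two_eq_zero (m := (![2, 3, 5, 7] : Fin 4 → ℕ) i) hA35 hq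
        (by revert i; decide)
      exact_mod_cast hi
    obtain ⟨d, hd⟩ :=
      exists_zmod_pow_eq_of_octicConj_relation hA hA35 hθ hgen hq hp.ne_zero hY hAY hrel g
    refine ⟨d ^ 2, ?_⟩
    rw [← pow_mul, mul_comm, pow_mul, hd]
    exact sq_prod_dihedralConj_two hℓ g⁻¹ (by rw [mul_one, sub_self]) f
  obtain ⟨he, hf⟩ := eq_and_eq_zero_of_exponent_relations h2p (e := fun g => (e g : ZMod p))
    (f := fun j => (f j : ZMod p)) fun g i => by
      have h := (ZMod.intCast_zmod_eq_zero_iff_dvd _ p).mpr (hdvd g i)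
      push_cast at h
      exact (mul_eq_zero.mp h).resolve_left h2p
  exact ⟨fun g => (ZMod.natCast_eq_natCast_iff _ _ _).mp (he g),
    fun j => (ZMod.intCast_zmod_eq_zero_iff_dvd _ _).mp (hf j)⟩

theorem eq_one_of_pow_eq_one_of_prime_modEq_two {p q : ℕ} (hp : p.Prime) (hp2 : p ≠ 2)
    (hq : q.Prime) (hqp : q ≡ 2 [MOD p]) (hA : 1 < A) (hA35 : IsCoprime (144 * A + 481) 35)
    (hθ : aeval θ (octic A) = 0) (hgen : Algebra.adjoin ℚ {(θ : K)} = ⊤)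
    (hqA : (q : ℤ) ∣ 144 * A + 481) {z : 𝓞 K} (hz : z ^ p = 1) : z = 1 := by
  have := Fact.mk hq
  obtain ⟨ψ, -⟩ := exists_padicInt_hom_octic hA hA35 hθ hgen
    ((ZMod.intCast_zmod_eq_zero_iff_dvd _ q).mpr hqA) 1
  have hpq : p.Coprime (q - 1) := by
    refine (hp.coprime_iff_not_dvd).mpr fun h => hp.one_lt.not_ge (Nat.le_of_dvd one_pos ?_)
    have := (Nat.modEq_iff_dvd' hq.two_le).mp hqp.symm
    have := Nat.dvd_sub h this
    rwa [show q - 1 - (q - 2) = 1 by have := hq.two_le; omega] at this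
  have hp0 : (p : ZMod q) ≠ 0 := by
    rw [Ne, CharP.cast_eq_zero_iff (ZMod q) q, Nat.prime_dvd_prime_iff_eq hq hp]
    rintro rfl
    exact hp2 ((Nat.prime_dvd_prime_iff_eq hp Nat.prime_two).mp
      ((Nat.modEq_zero_iff_dvd).mp ((hqp.symm).trans (by simp [Nat.ModEq]))))
  exact eq_one_of_pow_eq_one_of_ringHom (PadicInt.toZMod.comp ψ) hp0
    (fun c => eq_one_of_pow_eq_one_zmod hpq hp.ne_zero) hz

/-- The octic units generate `(𝓞 K)ˣ` modulo `p`-th powers, so it suffices to treat relations in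
which `u` is a product of powers of them. -/
theorem modEq_of_octicConj_unit_relation {p : ℕ} [Fact p.Prime] (hp2 : p ≠ 2) (hA : 1 < A)
    (hA35 : IsCoprime (144 * A + 481) 35) (hθ : aeval θ (octic A) = 0)
    (hgen : Algebra.adjoin ℚ {(θ : K)} = ⊤) {Y : ℕ} (hY : Y ≠ 0)
    (hAY : 144 * A + 481 = (Y : ℤ) ^ p) (hind : LocallyIndependent ![2, 3, 5, 7] p Y)
    (hroot : ∀ z : 𝓞 K, z ^ p = 1 → z = 1) {e : DihedralGroup 4 → ℕ} {u : (𝓞 K)ˣ} {γ : 𝓞 K}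
    (hrel : (∏ a, (octicConj hθ a - 2) ^ e a) * u = γ ^ p) (g : DihedralGroup 4) :
    e g ≡ e 1 [MOD p] := by
  have hfin : Module.finrank ℚ K = 8 :=
    (octic_galois_structure hA (aeval_coe_octic hθ) hgen).1
  have hrank : Fintype.card (Fin 3) = Units.rank K := by
    rw [units_rank_eq_of_totallyImaginary
      (totallyImaginary_of_octic two_ne_zero hA (aeval_coe_octic hθ)), hfin, Fintype.card_fin]
  obtain ⟨f, w, rfl⟩ := exists_unit_eq_prod_zpow_mul_pow hrank hroot (octicUnits hθ)
    (fun f w hw => (modEq_and_dvd_of_octicConj_relation hp2 hA hA35 hθ hgen hY hAY hind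
      (e := 0) (f := f) (γ := w) (by simp [hw])).2) u
  refine (modEq_and_dvd_of_octicConj_relation hp2 hA hA35 hθ hgen hY hAY hind (f := f)
    (γ := γ * (w⁻¹ : (𝓞 K)ˣ)) ?_).1 g
  rw [mul_pow, ← hrel, Units.val_mul, Units.val_pow_eq_pow_val, mul_assoc, mul_assoc, ← mul_pow,
    Units.mul_inv, one_pow, mul_one]

theorem hasZModRankGE_classGroup_octic {n y q : ℕ} (hn : n ≠ 0) (hn2 : ¬ 2 ∣ n) (hA : 1 < A)
    (hA35 : IsCoprime (144 * A + 481) 35) (hθ : aeval θ (octic A) = 0)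
    (hgen : Algebra.adjoin ℚ {(θ : K)} = ⊤) (hy : 144 * A + 481 = (y : ℤ) ^ n)
    (hq : q.Prime) (hqn : q ≡ 2 [MOD n]) (hqy : q ∣ y)
    (hind : ∀ p : ℕ, p.Prime → p ∣ n → LocallyIndependent ![2, 3, 5, 7] p y) :
    HasZModRankGE (ClassGroup (𝓞 K)) n 7 := by
  have hy0 : y ≠ 0 := by
    rintro rfl
    rw [Nat.cast_zero, zero_pow hn] at hy
    omega
  have hprod : ∏ a, (octicConj hθ a - 2) = (y : 𝓞 K) ^ n := by
    rw [prod_octicConj_sub_two, hy, Int.cast_pow, Int.cast_natCast]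
  refine hasZModRankGE_classGroup hn (Nat.cast_ne_zero.mpr hy0) hprod
    (pairwise_isCoprime_octicConj_sub_two hθ hA35) 1 fun p hp hpn e u γ hrel g => ?_
  have := Fact.mk hp
  have hp2 : p ≠ 2 := fun h => hn2 (h ▸ hpn)
  obtain ⟨m, rfl⟩ := hpn
  have hm : m ≠ 0 := right_ne_zero_of_mul hn
  refine modEq_of_octicConj_unit_relation hp2 hA hA35 hθ hgen (pow_ne_zero m hy0)
    (by rw [hy, Nat.cast_pow, ← pow_mul, mul_comm])
    ((hind p hp (dvd_mul_right p m)).of_dvd (dvd_pow_self y hm)) (fun z hz => ?_) hrel g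
  exact eq_one_of_pow_eq_one_of_prime_modEq_two hp hp2 hq (hqn.of_mul_right m) hA hA35 hθ hgen
    (hy ▸ dvd_pow (Int.natCast_dvd_natCast.mpr hqy) hn) hz

end ClassGroup

section Parameters

variable {n y : ℕ}

/-- The conditions imposed on `y` in the theorem. -/
structure IsAdmissible (n y : ℕ) : Prop where
  pos : 0 < y
  not_five_dvd : ¬ 5 ∣ y
  not_seven_dvd : ¬ 7 ∣ y
  mod_of_mod_three_eq_one : n % 3 = 1 → y % 144 = 49
  mod_of_mod_three_eq_two : n % 3 = 2 → y % 144 = 97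

theorem pow_modEq_self_of_mod_three_eq_one {x m : ℕ} (hx : x ^ 3 ≡ 1 [MOD 144]) (hm : m % 3 = 1) :
    x ^ m ≡ x [MOD 144] := by
  have h := (hx.pow (m / 3)).mul_right x
  rwa [one_pow, one_mul, ← pow_mul, ← pow_succ, ← hm, Nat.div_add_mod] at h

/-- `49` and `97 = 49²` have order `3` modulo `144`. -/
theorem IsAdmissible.pow_modEq (h : IsAdmissible n y) (hn : ¬ 3 ∣ n) : y ^ n ≡ 49 [MOD 144] := by
  obtain h3 | h3 : n % 3 = 1 ∨ n % 3 = 2 := by omega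
  · have hy : y ≡ 49 [MOD 144] := h.mod_of_mod_three_eq_one h3
    exact (hy.pow n).trans (pow_modEq_self_of_mod_three_eq_one (by decide) h3)
  · have hy : y ≡ 49 ^ 2 [MOD 144] := h.mod_of_mod_three_eq_two h3
    refine (hy.pow n).trans ?_
    rw [← pow_mul]
    exact pow_modEq_self_of_mod_three_eq_one (by decide) (by omega)

theorem IsAdmissible.pow {m : ℕ} (h : IsAdmissible (n * m) y) (hm : m % 3 = 1) :
    IsAdmissible n (y ^ m) where
  pos := pow_pos h.pos m
  not_five_dvd h5 := h.not_five_dvd (Nat.prime_five.dvd_of_dvd_pow h5)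
  not_seven_dvd h7 := h.not_seven_dvd (Nat.Prime.dvd_of_dvd_pow (by norm_num) h7)
  mod_of_mod_three_eq_one hn := by
    have hy := h.mod_of_mod_three_eq_one (by simp [Nat.mul_mod, hn, hm])
    rw [Nat.pow_mod, hy]
    exact pow_modEq_self_of_mod_three_eq_one (by decide) hm
  mod_of_mod_three_eq_two hn := by
    have hy := h.mod_of_mod_three_eq_two (by simp [Nat.mul_mod, hn, hm])
    rw [Nat.pow_mod, hy]
    exact pow_modEq_self_of_mod_three_eq_one (by decide) hm

/-- `3361` and `1681` are `1` modulo `35` and congruent to `49` and `97` modulo `144`. -/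
theorem exists_isAdmissible_of_prime_dvd (n : ℕ) {Q : ℕ} (hQ : ∀ r : ℕ, r.Prime → r ∣ Q → 7 < r) :
    ∃ y, Q ∣ y ∧ y % 35 = 1 ∧ 1000 < y ∧ IsAdmissible n y := by
  have hcop : Nat.Coprime 5040 Q := Nat.coprime_of_dvd fun r hr h hrQ => by
    have h7 : r ∣ Nat.factorial 7 := h
    exact (hQ r hr hrQ).not_ge (hr.dvd_factorial.mp h7)
  obtain ⟨y, hy, hyQ⟩ := Nat.chineseRemainder hcop (if n % 3 = 1 then 3361 else 1681) 0
  have hmod : y % 5040 = if n % 3 = 1 then 3361 else 1681 := by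
    rw [hy]
    split_ifs <;> rfl
  refine ⟨y, (Nat.modEq_zero_iff_dvd).mp hyQ, ?_, ?_, ?_, ?_, ?_, fun h => ?_, fun h => ?_⟩ <;>
    split_ifs at hmod <;> omega

theorem exists_locallyIndependent_forall_dvd (hn : n ≠ 0) (hn2 : n.Coprime 2) :
    ∃ Q q : ℕ, q.Prime ∧ q ≡ 2 [MOD n] ∧ q ∣ Q ∧ (∀ r : ℕ, r.Prime → r ∣ Q → 7 < r) ∧
      ∀ p : ℕ, p.Prime → p ∣ n → LocallyIndependent ![2, 3, 5, 7] p Q := by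
  have : NeZero n := ⟨hn⟩
  have hunit : IsUnit (2 : ZMod n) := by
    exact_mod_cast (ZMod.isUnit_iff_coprime 2 n).mpr hn2.symm
  obtain ⟨q, hq7, hq, hqn⟩ := Nat.forall_exists_prime_gt_and_eq_mod hunit 7
  have hind (p : n.primeFactors) := exists_locallyIndependent (ℓ := ![2, 3, 5, 7])
    (Nat.prime_of_mem_primeFactors p.2) (by decide) (by decide) 7
  choose Q hQ hQind using hind
  refine ⟨q * ∏ p, Q p, q, hq, ?_, dvd_mul_right _ _, fun r hr hrQ => ?_, fun p hp hpn => ?_⟩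
  · exact (ZMod.natCast_eq_natCast_iff _ _ _).mp (by exact_mod_cast hqn)
  · obtain hrq | hrQ := hr.dvd_mul.mp hrQ
    · rwa [(Nat.prime_dvd_prime_iff_eq hr hq).mp hrq]
    · obtain ⟨p, -, hp⟩ := (hr.prime.dvd_finsetProd_iff _).mp hrQ
      exact hQ p r hr hp
  · have hmem : p ∈ n.primeFactors := Nat.mem_primeFactors.mpr ⟨hp, hpn, hn⟩
    exact (hQind ⟨p, hmem⟩).of_dvd
      ((Finset.dvd_prod_of_mem Q (Finset.mem_univ _)).mul_left q)

end Parameters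

section Subfields

theorem eq_of_ringEquiv_of_isGalois {K K' : IntermediateField ℚ ℂ} [IsGalois ℚ K] (e : K ≃+* K') :
    K = K' := by
  let g : K →ₐ[ℚ] ℂ := K'.val.comp (e : K →+* K').toRatAlgHom
  have hnormal : @Normal ℚ K _ _ K.algebra' := ‹IsGalois ℚ K›.to_normal
  have hK : g.fieldRange = K := @AlgHom.fieldRange_of_normal _ _ _ _ _ K hnormal g
  rw [← hK]
  ext z
  refine ⟨fun ⟨x, hx⟩ => hx ▸ (e x).2, fun hz => ⟨e.symm ⟨z, hz⟩, ?_⟩⟩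
  exact congrArg Subtype.val (e.apply_symm_apply ⟨z, hz⟩)

theorem exists_octic_subfield (A : ℤ) :
    ∃ (K : IntermediateField ℚ ℂ) (_ : NumberField K) (θ : 𝓞 K),
      aeval θ (octic A) = 0 ∧ Algebra.adjoin ℚ {(θ : K)} = ⊤ := by
  obtain ⟨α, hα⟩ := IsAlgClosed.exists_aeval_eq_zero ℂ (octic A) (by
    rw [degree_eq_natDegree (monic_octic A).ne_zero, natDegree_octic]
    norm_num)
  have hα_int : IsIntegral ℤ α := ⟨octic A, monic_octic A, hα⟩
  have hα_rat : IsIntegral ℚ α := hα_int.tower_top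
  have : FiniteDimensional ℚ (IntermediateField.adjoin ℚ {α}) :=
    IntermediateField.adjoin.finiteDimensional hα_rat
  let x : IntermediateField.adjoin ℚ {α} := IntermediateField.AdjoinSimple.gen ℚ α
  have hx : IsIntegral ℤ x := (isIntegral_algebraMap_iff (B := ℂ) Subtype.val_injective).mp hα_int
  refine ⟨IntermediateField.adjoin ℚ {α}, .of_module_finite ℚ _, ⟨x, hx⟩, ?_, ?_⟩
  · refine (aeval_algebraMap_eq_zero_iff_of_injective RingOfIntegers.coe_injective).mp ?_
    exact (aeval_algebraMap_eq_zero_iff_of_injective (B := ℂ) Subtype.val_injective).mp hα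
  · have h := (IntermediateField.adjoin.powerBasis hα_rat).adjoin_gen_eq_top
    rwa [IntermediateField.adjoin.powerBasis_gen] at h

/-- `K` is a totally imaginary `D₄`-field, the splitting field of an irreducible octic with
parameter `A`. -/
structure IsDihedralOctic (A : ℤ) (K : IntermediateField ℚ ℂ) : Prop where
  irreducible : Irreducible (octicRat A)
  isSplittingField : (octicRat A).IsSplittingField ℚ K
  numberField : NumberField K
  finrank_eq : Module.finrank ℚ K = 8
  isGalois : IsGalois ℚ K
  nonempty_mulEquiv : Nonempty ((K ≃ₐ[ℚ] K) ≃* DihedralGroup 4)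
  totallyImaginary : TotallyImaginary K

theorem isDihedralOctic_of_adjoin_eq_top {K : IntermediateField ℚ ℂ} [NumberField K] {A : ℤ}
    (hA : 1 < A) {x : K} (hx : aeval x (octic A) = 0) (hgen : Algebra.adjoin ℚ {x} = ⊤) :
    IsDihedralOctic A K := by
  obtain ⟨hfin, hgal, hiso⟩ := octic_galois_structure hA hx hgen
  exact ⟨minpoly_eq_octic hA hx hgen ▸ minpoly.irreducible (.of_finite ℚ x),
    isSplittingField_octic hx hgen, inferInstance, hfin, hgal, hiso,
    totallyImaginary_of_octic two_ne_zero hA hx⟩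

theorem exists_isDihedralOctic_hasZModRankGE {n : ℕ} (hn : n ≠ 0) (hn6 : n.Coprime 6) :
    ∃ (y : ℕ) (A : ℤ) (K : IntermediateField ℚ ℂ), IsAdmissible n y ∧
      144 * A + 481 = (y : ℤ) ^ n ∧ IsDihedralOctic A K ∧ HasZModRankGE (ClassGroup (𝓞 K)) n 7 := by
  have hn2 : n.Coprime 2 := hn6.coprime_dvd_right (by norm_num)
  have hn3 : n.Coprime 3 := hn6.coprime_dvd_right (by norm_num)
  obtain ⟨Q, q, hq, hqn, hqQ, hQ, hind⟩ := exists_locallyIndependent_forall_dvd hn hn2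
  obtain ⟨y, hQy, hy35, hy1000, hy⟩ := exists_isAdmissible_of_prime_dvd n hQ
  have hmod : y ^ n ≡ 49 [MOD 144] :=
    hy.pow_modEq ((Nat.prime_three.coprime_iff_not_dvd).mp hn3.symm)
  have hlt : 1000 < y ^ n := hy1000.trans_le (Nat.le_self_pow hn y)
  obtain ⟨A, hA⟩ : ∃ A : ℤ, 144 * A + 481 = ((y ^ n : ℕ) : ℤ) := by
    unfold Nat.ModEq at hmod
    exact ⟨((y ^ n : ℕ) - 481) / 144, by omega⟩
  have hA1 : 1 < A := by omega
  have hA35 : IsCoprime (144 * A + 481) 35 := by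
    rw [hA, ← Nat.cast_ofNat, Nat.isCoprime_iff_coprime]
    refine Nat.Coprime.pow_left n ?_
    rw [Nat.Coprime, Nat.gcd_comm, Nat.gcd_rec, hy35, Nat.gcd_one_left]
  rw [Nat.cast_pow] at hA
  obtain ⟨K, hK, θ, hθ, hgen⟩ := exists_octic_subfield A
  refine ⟨y, A, K, hy, hA, isDihedralOctic_of_adjoin_eq_top hA1 (aeval_coe_octic hθ) hgen, ?_⟩
  exact hasZModRankGE_classGroup_octic hn ((Nat.prime_two.coprime_iff_not_dvd).mp hn2.symm) hA1
    hA35 hθ hgen hA hq hqn (hqQ.trans hQy) fun p hp hpn => (hind p hp hpn).of_dvd hQy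

end Subfields

theorem octicRat_eq {A : ℤ} {r : ℚ} (h : 144 * A + 481 = r) :
    X ^ 8 + C ((r - 481) / 36) * X ^ 6 - C ((r - 733) / 18) * X ^ 4 +
      C ((r - 481) / 36) * X ^ 2 + 1 = octicRat A := by
  rw [← h, show (144 * A + 481 - 481 : ℚ) / 36 = (4 * A : ℤ) by push_cast; ring,
    show (144 * A + 481 - 733 : ℚ) / 18 = (8 * A - 14 : ℤ) by push_cast; ring]
  simp only [octicRat, octic, Polynomial.map_add, Polynomial.map_sub, Polynomial.map_mul,
    Polynomial.map_pow, map_X, map_C, Polynomial.map_one, algebraMap_int_eq,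
    Int.coe_castRingHom]

/-- **`D₄`-fields with large class group.**
For every integer `n > 1` coprime to `6` there are infinitely many pairwise non-isomorphic
totally imaginary Galois number fields `K` of degree `8` with Galois group the dihedral
group `D₄` of order `8`, each a splitting field of an irreducible polynomial
`x⁸ + ((yⁿ-481)/36)x⁶ - ((yⁿ-733)/18)x⁴ + ((yⁿ-481)/36)x² + 1`
with `y` a positive integer, `5 ∤ y`, `7 ∤ y`, and `y ≡ 49 (mod 144)` if `n ≡ 1 (mod 3)`,
`y ≡ 97 (mod 144)` if `n ≡ 2 (mod 3)`, such that `rank_n Cl(K) ≥ 7`. -/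
theorem D4_large_class_group (n : ℕ) (hn : 1 < n) (hn6 : Nat.Coprime n 6) :
    ∃ S : Set (IntermediateField ℚ ℂ), S.Infinite ∧
      (∀ K ∈ S, ∀ K' ∈ S, K ≠ K' → IsEmpty (K ≃+* K')) ∧
      ∀ K ∈ S, ∃ y : ℕ, 0 < y ∧ ¬ (5 ∣ y) ∧ ¬ (7 ∣ y) ∧
        (n % 3 = 1 → y % 144 = 49) ∧ (n % 3 = 2 → y % 144 = 97) ∧
        (let P : Polynomial ℚ := X ^ 8 + C (((y : ℚ) ^ n - 481) / 36) * X ^ 6 -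
          C (((y : ℚ) ^ n - 733) / 18) * X ^ 4 + C (((y : ℚ) ^ n - 481) / 36) * X ^ 2 + 1
         Irreducible P ∧ P.IsSplittingField ℚ K) ∧
        NumberField K ∧ Module.finrank ℚ K = 8 ∧ IsGalois ℚ K ∧
        Nonempty ((K ≃ₐ[ℚ] K) ≃* DihedralGroup 4) ∧
        TotallyImaginary K ∧
        HasZModRankGE (ClassGroup (𝓞 K)) n 7 := by
  choose y A K hy hA hK hrank using fun k : ℕ =>
    exists_isDihedralOctic_hasZModRankGE (n := n * 7 ^ k) (by positivity)
      (hn6.mul_left (Nat.Coprime.pow_left k (by norm_num)))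
  refine ⟨Set.range K, ?_, ?_, ?_⟩
  · refine Set.Infinite.of_image (fun L : IntermediateField ℚ ℂ => Nat.card (ClassGroup (𝓞 L)))
      (Set.infinite_of_forall_exists_gt fun k => ⟨_, ⟨_, ⟨k, rfl⟩, rfl⟩, ?_⟩)
    have := (hK k).numberField
    calc k < 7 ^ k := Nat.lt_pow_self (by norm_num)
      _ ≤ n * 7 ^ k := Nat.le_mul_of_pos_left _ (by omega)
      _ ≤ (n * 7 ^ k) ^ 7 := Nat.le_self_pow (by norm_num) _
      _ ≤ Nat.card (ClassGroup (𝓞 (K k))) := (hrank k).pow_le_card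
  · rintro _ ⟨k, rfl⟩ L - hne
    have := (hK k).isGalois
    exact ⟨fun e => hne (eq_of_ringEquiv_of_isGalois e)⟩
  · rintro _ ⟨k, rfl⟩
    obtain ⟨hpos, h5, h7, h1, h2⟩ := (hy k).pow (Nat.pow_mod 7 k 3 ▸ by simp)
    have hpoly := octicRat_eq (A := A k) (r := ((y k ^ 7 ^ k : ℕ) : ℚ) ^ n) (by
      rw [Nat.cast_pow, ← pow_mul, mul_comm (7 ^ k)]
      exact_mod_cast hA k)
    obtain ⟨hirr, hsplit, hnf, hfin, hgal, hiso, himag⟩ := hK k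
    exact ⟨y k ^ 7 ^ k, hpos, h5, h7, h1, h2, hpoly ▸ ⟨hirr, hsplit⟩, hnf, hfin, hgal, hiso, himag,
      (hrank k).of_dvd (by positivity) (dvd_mul_right n _)⟩
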